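/- arXiv:2302.12300 — 6 statements merged into one kernel-verified Lean document; each statement's English description precedes it below -/
import Mathlib

section
/- Let μ₁ and μ₂ be finite Borel measures on ℝ with compact support, both diffuse (i.e., μᵢ({x}) = 0 for every x ∈ ℝ). Let 1 < p ≤ q < ∞ with p' = p/(p−1) and q' = q/(q−1). If B := sup_{r∈ℝ} μ₂([r,+∞))^{1/q} μ₁((−∞,r))^{1/p'} is finite, then for every Borel measurable function f : ℝ → [0,+∞], (∫_ℝ (∫_{(−∞,r)} f dμ₁)^q dμ₂(r))^{1/q} ≤ (q')^{1/p'} q^{1/q} B (∫_ℝ f^p dμ₁)^{1/p}. -/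
open MeasureTheory ENNReal
open scoped NNReal

/-!
Write `V s = μ₁ (-∞, s]`, `W r = μ₂ [r, ∞)` and let `B` be the Muckenhoupt constant. Since
`μ₁ {V < c} ≤ c`, the integral of `V ^ (-1/q)` over `(-∞, r)` is at most that of `x ^ (-1/q)` over
`(0, μ₁ (-∞, r))`, namely `q' μ₁ (-∞, r) ^ (1/q')`, and dually for `W`. Hölder's inequality applied
to `f = (f V ^ (1/(q p'))) V ^ (-1/(q p'))` therefore bounds `∫_{(-∞, r)} f dμ₁` by a weighted
`L^p` integral of `f` times a power of `μ₁ (-∞, r)`, which the definition of `B` trades for a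
negative power of `W r`. Minkowski's integral inequality with exponent `q / p ≥ 1` moves the
integration in `r` inside, and integrating the power of `W` over `(s, ∞)` leaves a power of
`μ₂ (s, ∞)` that cancels the weight `V s` up to a power of `B`.
-/

lemma ae_ne_zero_of_measure_setOf_lt_le {β : Type*} [MeasurableSpace β] {μ : Measure β}
    {g : β → ℝ≥0∞} (hμg : ∀ c, μ {x | g x < c} ≤ c) : ∀ᵐ x ∂μ, g x ≠ 0 := by
  refine measure_eq_zero_iff_ae_notMem.1 (le_bot_iff.1 <| le_of_forall_gt_imp_ge_of_dense
    fun c hc ↦ (measure_mono fun x hx ↦ ?_).trans (hμg c))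
  exact (show g x = 0 from hx).trans_lt hc

lemma measurable_measure_Iic {α : Type*} [LinearOrder α] [TopologicalSpace α]
    [OrderClosedTopology α] [MeasurableSpace α] [BorelSpace α] (μ : Measure α) :
    Measurable fun s ↦ μ (Set.Iic s) :=
  Monotone.measurable fun _ _ h ↦ measure_mono (Set.Iic_subset_Iic.2 h)

lemma measurable_measure_Ici {α : Type*} [LinearOrder α] [TopologicalSpace α]
    [OrderClosedTopology α] [MeasurableSpace α] [BorelSpace α] (μ : Measure α) :
    Measurable fun s ↦ μ (Set.Ici s) :=
  measurable_measure_Iic (α := αᵒᵈ) μ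

section LowerUpperSets

variable {α : Type*} [LinearOrder α] [TopologicalSpace α] [OrderClosedTopology α]
  [SecondCountableTopology α] [MeasurableSpace α] (μ : Measure α)

lemma measure_eq_iSup_measure_Iic_of_isLowerSet {L : Set α} (hL : IsLowerSet L) :
    μ L = ⨆ k ∈ L, μ (Set.Iic k) := by
  refine le_antisymm ?_ (iSup₂_le fun k hk ↦ measure_mono (hL.Iic_subset hk))
  by_cases hmax : ∃ k, IsGreatest L k
  · obtain ⟨k, hkL, hk⟩ := hmax
    exact (measure_mono hk).trans (le_iSup₂ (f := fun k _ ↦ μ (Set.Iic k)) k hkL)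
  obtain ⟨T, hTL, hTc, hT⟩ :=
    TopologicalSpace.isOpen_biUnion_countable L Set.Iio fun _ _ ↦ isOpen_Iio
  have hcover : L ⊆ ⋃ k ∈ T, Set.Iic k := by
    intro s hs
    obtain ⟨k, hkL, hsk⟩ : ∃ k ∈ L, s < k := by
      by_contra! hle
      exact hmax ⟨s, hs, hle⟩
    have hsT : s ∈ ⋃ k ∈ T, Set.Iio k := hT ▸ Set.mem_biUnion hkL hsk
    exact Set.biUnion_mono subset_rfl (fun _ _ ↦ Set.Iio_subset_Iic_self) hsT
  have hdir : DirectedOn (Function.onFun (· ⊆ ·) Set.Iic) T := fun a ha b hb ↦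
    ⟨max a b, max_rec' (· ∈ T) ha hb, Set.Iic_subset_Iic.2 (le_max_left a b),
      Set.Iic_subset_Iic.2 (le_max_right a b)⟩
  calc μ L ≤ μ (⋃ k ∈ T, Set.Iic k) := measure_mono hcover
    _ = ⨆ k ∈ T, μ (Set.Iic k) := measure_biUnion_eq_iSup hTc hdir
    _ ≤ ⨆ k ∈ L, μ (Set.Iic k) := biSup_mono hTL

lemma measure_eq_iSup_measure_Ici_of_isUpperSet {U : Set α} (hU : IsUpperSet U) :
    μ U = ⨆ k ∈ U, μ (Set.Ici k) :=
  measure_eq_iSup_measure_Iic_of_isLowerSet (α := αᵒᵈ) μ hU.toDual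

lemma measure_setOf_measure_Iic_lt_le (c : ℝ≥0∞) : μ {s | μ (Set.Iic s) < c} ≤ c := by
  have hL : IsLowerSet {s | μ (Set.Iic s) < c} := fun _ _ hts ↦
    (measure_mono (Set.Iic_subset_Iic.2 hts)).trans_lt
  rw [measure_eq_iSup_measure_Iic_of_isLowerSet μ hL]
  exact iSup₂_le fun _ hk ↦ le_of_lt hk

lemma ae_measure_Iic_ne_zero : ∀ᵐ s ∂μ, μ (Set.Iic s) ≠ 0 :=
  ae_ne_zero_of_measure_setOf_lt_le (measure_setOf_measure_Iic_lt_le μ)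

lemma ae_measure_Ici_ne_zero : ∀ᵐ r ∂μ, μ (Set.Ici r) ≠ 0 :=
  ae_measure_Iic_ne_zero (α := αᵒᵈ) μ

end LowerUpperSets

section PowerIntegrals

variable {q q' : ℝ}

lemma lintegral_Ioo_rpow_neg_inv (hq : q.HolderConjugate q') {m : ℝ} (hm : 0 ≤ m) :
    ∫⁻ x in Set.Ioo 0 m, ENNReal.ofReal (x ^ (-q⁻¹)) = ENNReal.ofReal (q' * m ^ q'⁻¹) := by
  have hint : IntervalIntegrable (fun x : ℝ ↦ x ^ (-q⁻¹)) volume 0 m :=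
    intervalIntegral.intervalIntegrable_rpow' (by linarith [hq.one_sub_inv, hq.symm.inv_pos])
  rw [← ofReal_integral_eq_lintegral_ofReal
      ((intervalIntegrable_iff_integrableOn_Ioo_of_le hm).1 hint)
      (ae_restrict_of_forall_mem measurableSet_Ioo fun x hx ↦ Real.rpow_nonneg hx.1.le _),
    ← integral_Ioc_eq_integral_Ioo, ← intervalIntegral.integral_of_le hm,
    integral_rpow (Or.inl (by linarith [hq.one_sub_inv, hq.symm.inv_pos])),
    show -q⁻¹ + 1 = q'⁻¹ by linarith [hq.one_sub_inv],
    Real.zero_rpow hq.symm.inv_ne_zero, sub_zero, div_inv_eq_mul, mul_comm]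

lemma measure_setOf_lt_rpow_neg_inv_le {β : Type*} [MeasurableSpace β] {μ : Measure β}
    [IsFiniteMeasure μ] {g : β → ℝ≥0∞} (hμg : ∀ c, μ {x | g x < c} ≤ c) (hq : 0 < q)
    {l : ℝ} (hl : 0 < l) :
    μ {x | l < (g x).toReal ^ (-q⁻¹)} ≤
      volume.restrict (Set.Ioo 0 (μ.real Set.univ)) {x | l < x ^ (-q⁻¹)} := by
  have hlt_iff {x : ℝ} (hx : 0 < x) : l < x ^ (-q⁻¹) ↔ x < l ^ (-q) := by
    rw [← inv_neg, Real.lt_rpow_inv_iff_of_neg hl hx (neg_lt_zero.2 hq)]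
  have hsub : {x | l < (g x).toReal ^ (-q⁻¹)} ⊆ {x | g x < ENNReal.ofReal (l ^ (-q))} := by
    intro x hx
    have hgx : 0 < (g x).toReal := by
      refine toReal_nonneg.lt_of_ne' fun h0 ↦ ?_
      rw [Set.mem_ofPred_eq, h0, Real.zero_rpow (by simpa using hq.ne')] at hx
      exact hl.not_gt hx
    exact (lt_ofReal_iff_toReal_lt (toReal_pos_iff.1 hgx).2.ne).2 ((hlt_iff hgx).1 hx)
  calc μ {x | l < (g x).toReal ^ (-q⁻¹)}
      ≤ min (μ Set.univ) (ENNReal.ofReal (l ^ (-q))) :=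
        le_min (measure_mono (Set.subset_univ _)) ((measure_mono hsub).trans (hμg _))
    _ = volume (Set.Ioo 0 (min (μ.real Set.univ) (l ^ (-q)))) := by
        rw [Real.volume_Ioo, sub_zero, ENNReal.ofReal_min, ofReal_measureReal]
    _ ≤ _ := by
        rw [Measure.restrict_apply' measurableSet_Ioo]
        refine measure_mono fun x hx ↦ ⟨?_, hx.1, hx.2.trans_le (min_le_left _ _)⟩
        exact (hlt_iff hx.1).2 (hx.2.trans_le (min_le_right _ _))

lemma lintegral_rpow_neg_inv_le {β : Type*} [MeasurableSpace β] {μ : Measure β}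
    {g : β → ℝ≥0∞} (hg : Measurable g) (hμg : ∀ c, μ {x | g x < c} ≤ c)
    (hq : q.HolderConjugate q') :
    ∫⁻ x, g x ^ (-q⁻¹) ∂μ ≤ ENNReal.ofReal q' * μ Set.univ ^ q'⁻¹ := by
  by_cases hμ : μ Set.univ = ⊤
  · rw [hμ, top_rpow_of_pos hq.symm.inv_pos, mul_top (ofReal_pos.2 hq.symm.pos).ne']
    exact le_top
  have : IsFiniteMeasure μ := ⟨lt_top_iff_ne_top.2 hμ⟩
  have hreal : ∫⁻ x, g x ^ (-q⁻¹) ∂μ = ∫⁻ x, ENNReal.ofReal ((g x).toReal ^ (-q⁻¹)) ∂μ := by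
    refine lintegral_congr_ae ?_
    filter_upwards [ae_ne_zero_of_measure_setOf_lt_le hμg] with x hx
    rw [toReal_rpow, ofReal_toReal (by simp [rpow_eq_top_iff, hx, hq.nonneg])]
  calc ∫⁻ x, g x ^ (-q⁻¹) ∂μ
      = ∫⁻ l in Set.Ioi 0, μ {x | l < (g x).toReal ^ (-q⁻¹)} := by
        rw [hreal, lintegral_eq_lintegral_meas_lt μ
          (.of_forall fun x ↦ Real.rpow_nonneg toReal_nonneg _) (by fun_prop)]
    _ ≤ ∫⁻ l in Set.Ioi 0,
          volume.restrict (Set.Ioo 0 (μ.real Set.univ)) {x : ℝ | l < x ^ (-q⁻¹)} :=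
        setLIntegral_mono' measurableSet_Ioi fun l hl ↦
          measure_setOf_lt_rpow_neg_inv_le hμg hq.pos hl
    _ = ∫⁻ x in Set.Ioo 0 (μ.real Set.univ), ENNReal.ofReal (x ^ (-q⁻¹)) := by
        rw [lintegral_eq_lintegral_meas_lt _ (ae_restrict_of_forall_mem measurableSet_Ioo
          fun x hx ↦ Real.rpow_nonneg hx.1.le _) (by fun_prop)]
    _ = ENNReal.ofReal q' * μ Set.univ ^ q'⁻¹ := by
        rw [lintegral_Ioo_rpow_neg_inv hq measureReal_nonneg, ENNReal.ofReal_mul hq.symm.nonneg,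
          ← ENNReal.ofReal_rpow_of_nonneg measureReal_nonneg hq.symm.inv_nonneg,
          ofReal_measureReal]

end PowerIntegrals

section Minkowski

variable {α β : Type*} [MeasurableSpace α] [MeasurableSpace β]

lemma lintegral_le_rpow_lintegral_rpow_of_le {μ : Measure α} {ν : Measure β} [SFinite μ]
    [SFinite ν] {K : α → β → ℝ≥0∞} (hK : Measurable (Function.uncurry K)) {θ : ℝ} (hθ : 1 < θ)
    {g : β → ℝ≥0∞} (hg : Measurable g) (hgK : ∀ r, g r ≤ (∫⁻ s, K s r ∂μ) ^ θ)
    (hg_fin : ∫⁻ r, g r ∂ν ≠ ⊤) :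
    ∫⁻ r, g r ∂ν ≤ (∫⁻ s, (∫⁻ r, K s r ^ θ ∂ν) ^ θ⁻¹ ∂μ) ^ θ := by
  have hconj : θ.conjExponent.HolderConjugate θ := (Real.HolderConjugate.conjExponent hθ).symm
  set θ' := θ.conjExponent
  set T := ∫⁻ r, g r ∂ν
  set R := ∫⁻ s, (∫⁻ r, K s r ^ θ ∂ν) ^ θ⁻¹ ∂μ
  have hsplit (a : ℝ≥0∞) : a = a ^ θ'⁻¹ * a ^ θ⁻¹ := by
    rw [← rpow_add_of_nonneg _ _ hconj.inv_nonneg hconj.symm.inv_nonneg,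
      hconj.inv_add_inv_eq_one, rpow_one]
  have hholder (s : α) :
      ∫⁻ r, g r ^ θ'⁻¹ * K s r ∂ν ≤ T ^ θ'⁻¹ * (∫⁻ r, K s r ^ θ ∂ν) ^ θ⁻¹ := by
    simpa only [one_div, Pi.mul_apply, rpow_inv_rpow hconj.ne_zero] using
      ENNReal.lintegral_mul_le_Lp_mul_Lq ν hconj (hg.pow_const θ'⁻¹).aemeasurable
        (g := K s) (by fun_prop)
  have hTR : T ^ θ'⁻¹ * T ^ θ⁻¹ ≤ T ^ θ'⁻¹ * R := by
    calc T ^ θ'⁻¹ * T ^ θ⁻¹ = T := (hsplit T).symm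
      _ ≤ ∫⁻ r, ∫⁻ s, g r ^ θ'⁻¹ * K s r ∂μ ∂ν := by
          refine lintegral_mono fun r ↦ ?_
          rw [lintegral_const_mul _ (by fun_prop)]
          exact (hsplit (g r)).trans_le
            (mul_le_mul_right ((rpow_inv_le_iff hconj.symm.pos).2 (hgK r)) _)
      _ = ∫⁻ s, ∫⁻ r, g r ^ θ'⁻¹ * K s r ∂ν ∂μ :=
          lintegral_lintegral_swap (by fun_prop)
      _ ≤ ∫⁻ s, T ^ θ'⁻¹ * (∫⁻ r, K s r ^ θ ∂ν) ^ θ⁻¹ ∂μ := lintegral_mono hholder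
      _ = T ^ θ'⁻¹ * R := lintegral_const_mul _
          ((hK.pow_const θ).lintegral_prod_right'.pow_const _)
  rcases eq_or_ne T 0 with hT | hT
  · simp only [hT, zero_le]
  · exact (rpow_inv_le_iff hconj.symm.pos).1 <| (ENNReal.mul_le_mul_iff_right
      (rpow_pos (pos_iff_ne_zero.2 hT) hg_fin).ne'
      (rpow_ne_top_of_nonneg hconj.inv_nonneg hg_fin)).1 hTR

lemma lintegral_rpow_lintegral_le_minkowski {μ : Measure α} {ν : Measure β} [SFinite μ]
    [SigmaFinite ν] {K : α → β → ℝ≥0∞} (hK : Measurable (Function.uncurry K)) {θ : ℝ}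
    (hθ : 1 ≤ θ) :
    ∫⁻ r, (∫⁻ s, K s r ∂μ) ^ θ ∂ν ≤ (∫⁻ s, (∫⁻ r, K s r ^ θ ∂ν) ^ θ⁻¹ ∂μ) ^ θ := by
  rcases hθ.eq_or_lt with rfl | hθ
  · simp only [rpow_one, inv_one]
    exact (lintegral_lintegral_swap (by fun_prop)).le
  rw [lintegral_eq_nnreal]
  refine iSup₂_le fun φ hφ ↦ le_of_forall_lt fun L hL ↦ ?_
  rw [← SimpleFunc.lintegral_eq_lintegral] at hL
  obtain ⟨g, hgφ, hg_fin, hLg⟩ := SimpleFunc.exists_lt_lintegral_simpleFunc_of_lt_lintegral hL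
  exact hLg.trans_le (lintegral_le_rpow_lintegral_rpow_of_le hK hθ (by fun_prop)
    (fun r ↦ (coe_le_coe.2 (hgφ r)).trans (hφ r)) hg_fin.ne)

end Minkowski

section MuckenhouptConst

variable {α : Type*} [LinearOrder α] [MeasurableSpace α] {μ₁ μ₂ : Measure α} {p' q q' : ℝ}

/-- The Muckenhoupt constant of the pair `(μ₁, μ₂)`, whose finiteness characterises the Hardy
inequality `L^p(μ₁) → L^q(μ₂)`. Its last argument is the conjugate exponent `p'` of `p`. -/
noncomputable def muckenhouptConst (μ₁ μ₂ : Measure α) (q p' : ℝ) : ℝ≥0∞ :=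
  ⨆ r, μ₂ (Set.Ici r) ^ q⁻¹ * μ₁ (Set.Iio r) ^ p'⁻¹

lemma measure_Ici_rpow_mul_measure_Iio_rpow_le_muckenhouptConst (r : α) :
    μ₂ (Set.Ici r) ^ q⁻¹ * μ₁ (Set.Iio r) ^ p'⁻¹ ≤ muckenhouptConst μ₁ μ₂ q p' :=
  le_iSup (fun r ↦ μ₂ (Set.Ici r) ^ q⁻¹ * μ₁ (Set.Iio r) ^ p'⁻¹) r

lemma measure_Iio_rpow_le_muckenhouptConst_rpow_mul (hq : q.HolderConjugate q') {r : α}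
    (hr : μ₂ (Set.Ici r) ≠ 0) (hr_top : μ₂ (Set.Ici r) ≠ ⊤) :
    μ₁ (Set.Iio r) ^ (p'⁻¹ * (q - 1)) ≤
      muckenhouptConst μ₁ μ₂ q p' ^ (q - 1) * μ₂ (Set.Ici r) ^ (-q'⁻¹) := by
  have hexp : q⁻¹ * (q - 1) + -q'⁻¹ = 0 := by
    rw [← hq.one_sub_inv, mul_sub, inv_mul_cancel₀ hq.ne_zero]; ring
  calc μ₁ (Set.Iio r) ^ (p'⁻¹ * (q - 1))
      = (μ₂ (Set.Ici r) ^ q⁻¹ * μ₁ (Set.Iio r) ^ p'⁻¹) ^ (q - 1) *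
          μ₂ (Set.Ici r) ^ (-q'⁻¹) := by
        rw [mul_rpow_of_nonneg _ _ hq.sub_one_pos.le, mul_right_comm, ← rpow_mul, ← rpow_mul,
          ← rpow_add _ _ hr hr_top, hexp, rpow_zero, one_mul]
    _ ≤ _ := by
        gcongr
        · exact hq.sub_one_pos.le
        · exact measure_Ici_rpow_mul_measure_Iio_rpow_le_muckenhouptConst r

lemma measure_Ioi_rpow_mul_measure_Iic_rpow_le_muckenhouptConst [TopologicalSpace α]
    [OrderClosedTopology α] [SecondCountableTopology α] (hq : 0 < q) (hp' : 0 < p') (s : α) :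
    μ₂ (Set.Ioi s) ^ q⁻¹ * μ₁ (Set.Iic s) ^ p'⁻¹ ≤ muckenhouptConst μ₁ μ₂ q p' := by
  have hsup : μ₂ (Set.Ioi s) ^ q⁻¹ = ⨆ r ∈ Set.Ioi s, μ₂ (Set.Ici r) ^ q⁻¹ := by
    rw [measure_eq_iSup_measure_Ici_of_isUpperSet μ₂ (isUpperSet_Ioi s)]
    exact (orderIsoRpow q⁻¹ (inv_pos.2 hq)).map_iSup₂ _
  simp only [hsup, iSup_mul]
  refine iSup₂_le fun r hr ↦ le_trans ?_
    (measure_Ici_rpow_mul_measure_Iio_rpow_le_muckenhouptConst r)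
  gcongr
  exact hr

end MuckenhouptConst

section Hardy

variable {α : Type*} [LinearOrder α] [TopologicalSpace α] [OrderClosedTopology α]
  [SecondCountableTopology α] [MeasurableSpace α] [BorelSpace α]
  {μ₁ μ₂ : Measure α} {p p' q q' : ℝ} {f : α → ℝ≥0∞}

lemma setLIntegral_Iio_measure_Iic_rpow_neg_inv_le (μ : Measure α) (hq : q.HolderConjugate q')
    (r : α) :
    ∫⁻ s in Set.Iio r, μ (Set.Iic s) ^ (-q⁻¹) ∂μ ≤
      ENNReal.ofReal q' * μ (Set.Iio r) ^ q'⁻¹ := by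
  simpa only [Measure.restrict_apply_univ] using
    lintegral_rpow_neg_inv_le (μ := μ.restrict (Set.Iio r)) (measurable_measure_Iic μ)
      (fun c ↦ (Measure.restrict_apply_le _ _).trans (measure_setOf_measure_Iic_lt_le μ c)) hq

lemma setLIntegral_Ioi_measure_Ici_rpow_neg_inv_le (μ : Measure α) (hq : q.HolderConjugate q')
    (s : α) :
    ∫⁻ r in Set.Ioi s, μ (Set.Ici r) ^ (-q⁻¹) ∂μ ≤
      ENNReal.ofReal q' * μ (Set.Ioi s) ^ q'⁻¹ :=
  setLIntegral_Iio_measure_Iic_rpow_neg_inv_le (α := αᵒᵈ) μ hq s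

lemma setLIntegral_Iio_le_weighted_mul (hp : p.HolderConjugate p') (hq : q.HolderConjugate q')
    (hf : Measurable f) {r : α} (hr : μ₁ (Set.Iio r) ≠ ⊤) :
    ∫⁻ s in Set.Iio r, f s ∂μ₁ ≤
      (∫⁻ s in Set.Iio r, f s ^ p * μ₁ (Set.Iic s) ^ (p / (q * p')) ∂μ₁) ^ p⁻¹ *
        (ENNReal.ofReal q' * μ₁ (Set.Iio r) ^ q'⁻¹) ^ p'⁻¹ := by
  set u : α → ℝ≥0∞ := fun s ↦ μ₁ (Set.Iic s) ^ (q * p')⁻¹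
  set v : α → ℝ≥0∞ := fun s ↦ μ₁ (Set.Iic s) ^ (-(q * p')⁻¹)
  have hu_meas : Measurable u := (measurable_measure_Iic μ₁).pow_const _
  have hv_meas : Measurable v := (measurable_measure_Iic μ₁).pow_const _
  have huv : ∀ᵐ s ∂μ₁.restrict (Set.Iio r), f s = f s * u s * v s := by
    filter_upwards [ae_restrict_of_ae (ae_measure_Iic_ne_zero μ₁),
      ae_restrict_mem measurableSet_Iio] with s hs hsr
    have hs_top : μ₁ (Set.Iic s) ≠ ⊤ :=
      measure_ne_top_of_subset (Set.Iic_subset_Iio.2 hsr) hr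
    rw [mul_assoc, ← rpow_add _ _ hs hs_top, add_neg_cancel, rpow_zero, mul_one]
  have hu (s : α) : (f s * u s) ^ p = f s ^ p * μ₁ (Set.Iic s) ^ (p / (q * p')) := by
    rw [mul_rpow_of_nonneg _ _ hp.nonneg, ← rpow_mul, inv_mul_eq_div]
  have hv (s : α) : v s ^ p' = μ₁ (Set.Iic s) ^ (-q⁻¹) := by
    rw [← rpow_mul, neg_mul, mul_inv, inv_mul_cancel_right₀ hp.symm.ne_zero]
  calc ∫⁻ s in Set.Iio r, f s ∂μ₁ = ∫⁻ s in Set.Iio r, f s * u s * v s ∂μ₁ :=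
        lintegral_congr_ae huv
    _ ≤ (∫⁻ s in Set.Iio r, (f s * u s) ^ p ∂μ₁) ^ p⁻¹ *
          (∫⁻ s in Set.Iio r, v s ^ p' ∂μ₁) ^ p'⁻¹ := by
        simpa only [one_div, Pi.mul_apply] using ENNReal.lintegral_mul_le_Lp_mul_Lq
          (μ₁.restrict (Set.Iio r)) hp (hf.mul hu_meas).aemeasurable hv_meas.aemeasurable
    _ ≤ _ := by
        simp only [hu, hv]
        gcongr
        · exact hp.symm.inv_nonneg
        · exact setLIntegral_Iio_measure_Iic_rpow_neg_inv_le μ₁ hq r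

lemma lintegral_rpow_setLIntegral_Iio_mul_le [SFinite μ₁] [SigmaFinite μ₂] {F w : α → ℝ≥0∞}
    (hF : Measurable F) (hw : Measurable w) {θ : ℝ} (hθ : 1 ≤ θ) :
    ∫⁻ r, (∫⁻ s in Set.Iio r, F s ∂μ₁) ^ θ * w r ∂μ₂ ≤
      (∫⁻ s, F s * (∫⁻ r in Set.Ioi s, w r ∂μ₂) ^ θ⁻¹ ∂μ₁) ^ θ := by
  have hθ0 : 0 < θ := zero_lt_one.trans_le hθ
  set K : α → α → ℝ≥0∞ := fun s r ↦ if s < r then F s * w r ^ θ⁻¹ else 0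
  have hK : Measurable (Function.uncurry K) :=
    Measurable.ite (measurableSet_lt measurable_fst measurable_snd) (by fun_prop)
      measurable_const
  have hKr (r : α) : (∫⁻ s, K s r ∂μ₁) ^ θ = (∫⁻ s in Set.Iio r, F s ∂μ₁) ^ θ * w r := by
    have hind : (K · r) = (Set.Iio r).indicator fun s ↦ F s * w r ^ θ⁻¹ := by
      ext s
      simp only [K, Set.indicator_apply, Set.mem_Iio]
    rw [hind, lintegral_indicator measurableSet_Iio, lintegral_mul_const _ hF,
      mul_rpow_of_nonneg _ _ hθ0.le, rpow_inv_rpow hθ0.ne']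
  have hKs (s : α) :
      (∫⁻ r, K s r ^ θ ∂μ₂) ^ θ⁻¹ = F s * (∫⁻ r in Set.Ioi s, w r ∂μ₂) ^ θ⁻¹ := by
    have hind : (K s · ^ θ) = (Set.Ioi s).indicator fun r ↦ F s ^ θ * w r := by
      ext r
      by_cases hsr : s < r <;>
        simp [K, hsr, hθ0, mul_rpow_of_nonneg _ _ hθ0.le, rpow_inv_rpow hθ0.ne']
    rw [hind, lintegral_indicator measurableSet_Ioi, lintegral_const_mul _ hw,
      mul_rpow_of_nonneg _ _ (inv_nonneg.2 hθ0.le), rpow_rpow_inv hθ0.ne']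
  simpa only [hKr, hKs] using lintegral_rpow_lintegral_le_minkowski (μ := μ₁) (ν := μ₂) hK hθ

lemma ae_setLIntegral_Iio_rpow_le (hp : p.HolderConjugate p') (hq : q.HolderConjugate q')
    (hB : muckenhouptConst μ₁ μ₂ q p' ≠ ⊤) (hf : Measurable f) :
    ∀ᵐ r ∂μ₂, (∫⁻ s in Set.Iio r, f s ∂μ₁) ^ q ≤
      ENNReal.ofReal q' ^ (q / p') * muckenhouptConst μ₁ μ₂ q p' ^ (q - 1) *
        ((∫⁻ s in Set.Iio r, f s ^ p * μ₁ (Set.Iic s) ^ (p / (q * p')) ∂μ₁) ^ (q / p) *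
          μ₂ (Set.Ici r) ^ (-q'⁻¹)) := by
  filter_upwards [ae_measure_Ici_ne_zero μ₂] with r hr
  by_cases hV : μ₁ (Set.Iio r) = 0
  · simp [setLIntegral_measure_zero _ _ hV, hq.pos]
  have hprod := ne_top_of_le_ne_top hB (measure_Ici_rpow_mul_measure_Iio_rpow_le_muckenhouptConst r)
  have hV_top : μ₁ (Set.Iio r) ≠ ⊤ := fun h ↦ hprod <| by
    rw [h, top_rpow_of_pos hp.symm.inv_pos, mul_top (by simp [hr, hq.nonneg])]
  have hW_top : μ₂ (Set.Ici r) ≠ ⊤ := fun h ↦ hprod <| by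
    rw [h, top_rpow_of_pos hq.inv_pos, top_mul (by simp [hV, hp.symm.nonneg])]
  set I := ∫⁻ s in Set.Iio r, f s ^ p * μ₁ (Set.Iic s) ^ (p / (q * p')) ∂μ₁
  have hqp' : 0 ≤ q / p' := div_nonneg hq.nonneg hp.symm.nonneg
  calc (∫⁻ s in Set.Iio r, f s ∂μ₁) ^ q
      ≤ (I ^ p⁻¹ * (ENNReal.ofReal q' * μ₁ (Set.Iio r) ^ q'⁻¹) ^ p'⁻¹) ^ q :=
        rpow_le_rpow (setLIntegral_Iio_le_weighted_mul hp hq hf hV_top) hq.nonneg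
    _ = I ^ (q / p) *
          (ENNReal.ofReal q' ^ (q / p') * μ₁ (Set.Iio r) ^ (p'⁻¹ * (q - 1))) := by
        rw [mul_rpow_of_nonneg _ _ hq.nonneg, ← rpow_mul, ← rpow_mul, inv_mul_eq_div,
          inv_mul_eq_div, mul_rpow_of_nonneg _ _ hqp', ← rpow_mul, ← hq.div_conj_eq_sub_one]
        ring_nf
    _ ≤ I ^ (q / p) * (ENNReal.ofReal q' ^ (q / p') *
          (muckenhouptConst μ₁ μ₂ q p' ^ (q - 1) * μ₂ (Set.Ici r) ^ (-q'⁻¹))) := by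
        gcongr
        exact measure_Iio_rpow_le_muckenhouptConst_rpow_mul hq hr hW_top
    _ = _ := by ring

lemma measure_Iic_rpow_mul_setLIntegral_Ioi_rpow_le (hp : p.HolderConjugate p')
    (hq : q.HolderConjugate q') (s : α) :
    μ₁ (Set.Iic s) ^ (p / (q * p')) *
        (∫⁻ r in Set.Ioi s, μ₂ (Set.Ici r) ^ (-q'⁻¹) ∂μ₂) ^ (p / q) ≤
      (ENNReal.ofReal q * muckenhouptConst μ₁ μ₂ q p') ^ (p / q) := by
  have hpq : 0 ≤ p / q := div_nonneg hp.nonneg hq.nonneg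
  calc μ₁ (Set.Iic s) ^ (p / (q * p')) *
        (∫⁻ r in Set.Ioi s, μ₂ (Set.Ici r) ^ (-q'⁻¹) ∂μ₂) ^ (p / q)
      ≤ (μ₁ (Set.Iic s) ^ p'⁻¹) ^ (p / q) *
          (ENNReal.ofReal q * μ₂ (Set.Ioi s) ^ q⁻¹) ^ (p / q) := by
        rw [← rpow_mul, inv_mul_eq_div, div_div]
        gcongr
        exact setLIntegral_Ioi_measure_Ici_rpow_neg_inv_le μ₂ hq.symm s
    _ = (ENNReal.ofReal q * (μ₂ (Set.Ioi s) ^ q⁻¹ * μ₁ (Set.Iic s) ^ p'⁻¹)) ^ (p / q) := by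
        rw [← mul_rpow_of_nonneg _ _ hpq]
        ring_nf
    _ ≤ _ := by
        gcongr
        exact measure_Ioi_rpow_mul_measure_Iic_rpow_le_muckenhouptConst hq.pos hp.symm.pos s

lemma lintegral_setLIntegral_Iio_rpow_le [SFinite μ₁] [SigmaFinite μ₂]
    (hp : p.HolderConjugate p') (hq : q.HolderConjugate q') (hpq : p ≤ q)
    (hB : muckenhouptConst μ₁ μ₂ q p' ≠ ⊤) (hf : Measurable f) :
    ∫⁻ r, (∫⁻ s in Set.Iio r, f s ∂μ₁) ^ q ∂μ₂ ≤
      ENNReal.ofReal q' ^ (q / p') * ENNReal.ofReal q * muckenhouptConst μ₁ μ₂ q p' ^ q *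
        (∫⁻ s, f s ^ p ∂μ₁) ^ (q / p) := by
  set B := muckenhouptConst μ₁ μ₂ q p'
  set F : α → ℝ≥0∞ := fun s ↦ f s ^ p * μ₁ (Set.Iic s) ^ (p / (q * p'))
  set w : α → ℝ≥0∞ := fun r ↦ μ₂ (Set.Ici r) ^ (-q'⁻¹)
  have hF : Measurable F := (hf.pow_const p).mul ((measurable_measure_Iic μ₁).pow_const _)
  have hw : Measurable w := (measurable_measure_Ici μ₂).pow_const _
  have hqp' : 0 ≤ q / p' := div_nonneg hq.nonneg hp.symm.nonneg
  have hqp : 0 ≤ q / p := div_nonneg hq.nonneg hp.nonneg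
  have hBq : B ^ q = B ^ (q - 1) * B := by
    rw [← sub_add_cancel q 1, rpow_add_of_nonneg _ _ hq.sub_one_pos.le zero_le_one, rpow_one,
      add_sub_cancel_right]
  calc ∫⁻ r, (∫⁻ s in Set.Iio r, f s ∂μ₁) ^ q ∂μ₂
      ≤ ∫⁻ r, ENNReal.ofReal q' ^ (q / p') * B ^ (q - 1) *
          ((∫⁻ s in Set.Iio r, F s ∂μ₁) ^ (q / p) * w r) ∂μ₂ :=
        lintegral_mono_ae (ae_setLIntegral_Iio_rpow_le hp hq hB hf)
    _ = ENNReal.ofReal q' ^ (q / p') * B ^ (q - 1) *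
          ∫⁻ r, (∫⁻ s in Set.Iio r, F s ∂μ₁) ^ (q / p) * w r ∂μ₂ :=
        lintegral_const_mul' _ _ <| mul_ne_top (rpow_ne_top_of_nonneg hqp' ofReal_ne_top)
          (rpow_ne_top_of_nonneg hq.sub_one_pos.le hB)
    _ ≤ ENNReal.ofReal q' ^ (q / p') * B ^ (q - 1) *
          (∫⁻ s, F s * (∫⁻ r in Set.Ioi s, w r ∂μ₂) ^ (p / q) ∂μ₁) ^ (q / p) := by
        gcongr
        simpa only [inv_div] using lintegral_rpow_setLIntegral_Iio_mul_le hF hw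
          ((one_le_div hp.pos).2 hpq)
    _ ≤ ENNReal.ofReal q' ^ (q / p') * B ^ (q - 1) *
          ((ENNReal.ofReal q * B) ^ (p / q) * ∫⁻ s, f s ^ p ∂μ₁) ^ (q / p) := by
        rw [← lintegral_const_mul _ (hf.pow_const p)]
        refine mul_le_mul_right (rpow_le_rpow (lintegral_mono fun s ↦ ?_) hqp) _
        rw [mul_assoc, mul_comm]
        exact mul_le_mul_left (measure_Iic_rpow_mul_setLIntegral_Ioi_rpow_le hp hq s) _
    _ = _ := by
        rw [mul_rpow_of_nonneg _ _ hqp, ← inv_div q p,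
          rpow_inv_rpow (div_pos hq.pos hp.pos).ne', hBq]
        ring

end Hardy

theorem hardy_inequality_diffuse_compact_dual_constant_general {α : Type*} [LinearOrder α]
    [TopologicalSpace α] [OrderClosedTopology α] [SecondCountableTopology α] [MeasurableSpace α]
    [BorelSpace α] (μ₁ μ₂ : Measure α) [SFinite μ₁] [SigmaFinite μ₂] {p q p' q' : ℝ}
    (hp : p.HolderConjugate p') (hq : q.HolderConjugate q') (hpq : p ≤ q)
    (hB : muckenhouptConst μ₁ μ₂ q p' ≠ ⊤) {f : α → ℝ≥0∞} (hf : Measurable f) :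
    (∫⁻ r, (∫⁻ s in Set.Iio r, f s ∂μ₁) ^ q ∂μ₂) ^ q⁻¹ ≤
      ENNReal.ofReal (q' ^ p'⁻¹ * q ^ q⁻¹) * muckenhouptConst μ₁ μ₂ q p' *
        (∫⁻ s, f s ^ p ∂μ₁) ^ p⁻¹ := by
  rw [rpow_inv_le_iff hq.pos]
  refine (lintegral_setLIntegral_Iio_rpow_le hp hq hpq hB hf).trans_eq ?_
  rw [ENNReal.ofReal_mul (Real.rpow_nonneg hq.symm.nonneg _),
    ← ENNReal.ofReal_rpow_of_pos hq.symm.pos, ← ENNReal.ofReal_rpow_of_pos hq.pos]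
  simp only [mul_rpow_of_nonneg _ _ hq.nonneg, rpow_inv_rpow hq.ne_zero, ← rpow_mul,
    inv_mul_eq_div]

/-- One-variable Hardy inequality for diffuse, compactly supported finite Borel measures,
with the dual constant `(q')^(1/p') q^(1/q)`. -/
theorem hardy_inequality_diffuse_compact_dual_constant
    (μ₁ μ₂ : Measure ℝ) [IsFiniteMeasure μ₁] [IsFiniteMeasure μ₂]
    (hd₁ : ∀ x : ℝ, μ₁ {x} = 0) (hd₂ : ∀ x : ℝ, μ₂ {x} = 0)
    (K₁ K₂ : Set ℝ) (hK₁ : IsCompact K₁) (hK₂ : IsCompact K₂)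
    (hμ₁K : μ₁ K₁ᶜ = 0) (hμ₂K : μ₂ K₂ᶜ = 0)
    (p q p' q' : ℝ) (hp : 1 < p) (hpq : p ≤ q)
    (hp' : p' = p / (p - 1)) (hq' : q' = q / (q - 1))
    (B : ℝ≥0∞)
    (hB : B = ⨆ r : ℝ, μ₂ (Set.Ici r) ^ (1 / q) * μ₁ (Set.Iio r) ^ (1 / p'))
    (hBfin : B ≠ ⊤) :
    ∀ f : ℝ → ℝ≥0∞, Measurable f →
      (∫⁻ r, (∫⁻ s in Set.Iio r, f s ∂μ₁) ^ q ∂μ₂) ^ (1 / q) ≤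
        ENNReal.ofReal (q' ^ (1 / p') * q ^ (1 / q)) * B *
          (∫⁻ s, f s ^ p ∂μ₁) ^ (1 / p) := by
  intro f hf
  have hpp' : p.HolderConjugate p' := (Real.holderConjugate_iff_eq_conjExponent hp).2 hp'
  have hqq' : q.HolderConjugate q' :=
    (Real.holderConjugate_iff_eq_conjExponent (hp.trans_le hpq)).2 hq'
  simp only [one_div] at hB ⊢
  subst hB
  exact hardy_inequality_diffuse_compact_dual_constant_general μ₁ μ₂ hpp' hqq' hpq hBfin hf
end

section
/- Let μ₁ and μ₂ be finite Borel measures on ℝ with compact support (both possibly with atoms). Let 1 < p ≤ q < ∞ with p' = p/(p−1) and q' = q/(q−1). If B := sup_{r∈ℝ} μ₂([r,+∞))^{1/q} μ₁((−∞,r))^{1/p'} is finite, then for every Borel measurable function f : ℝ → [0,+∞], (∫_ℝ (∫_{(−∞,r)} f dμ₁)^q dμ₂(r))^{1/q} ≤ min((p')^{1/p'} p^{1/q}, (q')^{1/p'} q^{1/q}) B (∫_ℝ f^p dμ₁)^{1/p}. -/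
open MeasureTheory ENNReal
open scoped NNReal

/-!
Write `M s = μ₁ (Iic s)`, `m r = μ₁ (Iio r)` and `N r = μ₂ (Ici r)`, and let `t`, `t'` be any pair
of conjugate exponents. Hölder's inequality with the weight `M ^ (1 / (t p'))` bounds
`∫_{Iio r} f` by a weighted `L^p` norm of `f` over `Iio r`, times
`(∫_{Iio r} M ^ (-1 / t)) ^ (1 / p')`. The latter integral is at most `t' m(r) ^ (1 / t')`: atoms do
not matter, since the layer-cake formula only uses `μ₁ {M ≤ c} ≤ c`. Minkowski's integral inequality
with exponent `q / p` then swaps the two integrations, and `m ^ (1 / p') ≤ B N ^ (-1 / q)` reduces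
the remaining `μ₂`-integral to `∫_{Ioi s} N ^ (-1 / t') ≤ t μ₂ (Ioi s) ^ (1 / t)`. This yields the
constant `t' ^ (1 / p') t ^ (1 / q)`; the two terms of the minimum are `t = p` and `t = q`.
-/

open Set

section SublevelSets

variable {α : Type*} [LinearOrder α] [TopologicalSpace α] [OrderTopology α]
  [SecondCountableTopology α] [MeasurableSpace α] {μ : Measure α} {S : Set α} {c : ℝ≥0∞}

lemma measure_le_of_forall_measure_Iic_le (h : ∀ k ∈ S, μ (Iic k) ≤ c) : μ S ≤ c := by
  by_cases hmax : ∃ k, IsGreatest S k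
  · obtain ⟨k, hkS, hk⟩ := hmax
    exact (measure_mono hk).trans (h k hkS)
  -- Without a greatest element, the open rays `Iio k` with `k ∈ S` already cover `S`.
  obtain ⟨T, hTS, hT, hunion⟩ :=
    TopologicalSpace.isOpen_biUnion_countable S Iio fun _ _ => isOpen_Iio
  have hcover : S ⊆ ⋃ k ∈ T, Iio k := by
    intro x hx
    rw [hunion]
    have hx' : x ∉ upperBounds S := fun hub => hmax ⟨x, hx, hub⟩
    simpa [upperBounds] using hx'
  have hdir : DirectedOn (Function.onFun (· ⊆ ·) Iio) T := fun a ha b hb =>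
    (le_total a b).elim (fun hab => ⟨b, hb, Iio_subset_Iio hab, Subset.rfl⟩)
      fun hba => ⟨a, ha, Subset.rfl, Iio_subset_Iio hba⟩
  calc μ S ≤ μ (⋃ k ∈ T, Iio k) := measure_mono hcover
    _ = ⨆ k ∈ T, μ (Iio k) := measure_biUnion_eq_iSup hT hdir
    _ ≤ c := iSup₂_le fun k hk => (measure_mono Iio_subset_Iic_self).trans (h k (hTS hk))

lemma measure_le_of_forall_measure_Ici_le (h : ∀ k ∈ S, μ (Ici k) ≤ c) : μ S ≤ c :=
  measure_le_of_forall_measure_Iic_le (α := αᵒᵈ) h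

lemma ae_measure_Iic_ne_zero_s8 : ∀ᵐ x ∂μ, μ (Iic x) ≠ 0 := by
  simpa [ae_iff] using measure_le_of_forall_measure_Iic_le (μ := μ) (S := {x | μ (Iic x) = 0})
    fun _ hk => hk.le

lemma ae_measure_Ici_ne_zero_s8 : ∀ᵐ x ∂μ, μ (Ici x) ≠ 0 :=
  ae_measure_Iic_ne_zero_s8 (α := αᵒᵈ)

end SublevelSets

section NegativePowers

lemma ofReal_add_lintegral_Ioi_rpow_neg {t t' V : ℝ} (ht : t.HolderConjugate t') (hV : 0 < V) :
    ENNReal.ofReal (V * V ^ (-(1 / t))) +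
      ∫⁻ x in Ioi (V ^ (-(1 / t))), ENNReal.ofReal (x ^ (-t)) =
      ENNReal.ofReal (t' * V ^ (1 / t')) := by
  set c := V ^ (-(1 / t)) with hc
  have hcpos : 0 < c := Real.rpow_pos_of_pos hV _
  have ht1 : -t < -1 := neg_lt_neg ht.lt
  have hhead : V * c = V ^ (1 / t') := by
    rw [hc, one_div t', ← ht.one_sub_inv, sub_eq_add_neg, Real.rpow_add hV, Real.rpow_one, one_div]
  have htail : c ^ (-t + 1) = V ^ (1 / t') := by
    rw [hc, ← Real.rpow_mul hV.le, one_div t', ← ht.one_sub_inv]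
    congr 1
    have := ht.ne_zero
    field_simp
    ring
  rw [← ofReal_integral_eq_lintegral_ofReal (integrableOn_Ioi_rpow_of_lt ht1 hcpos)
      ((ae_restrict_mem measurableSet_Ioi).mono fun x hx => Real.rpow_nonneg (hcpos.trans hx).le _),
    integral_Ioi_rpow_of_lt ht1 hcpos, htail, hhead, ← ENNReal.ofReal_add (by positivity)
      (div_nonneg_of_nonpos (neg_nonpos.2 (by positivity)) (by linarith)), ht.conjugate_eq]
  congr 1
  have h1 := ht.sub_one_ne_zero
  have h2 : -t + 1 ≠ 0 := by linarith
  field_simp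
  ring

variable {α : Type*} [MeasurableSpace α] {ν : Measure α} {g : α → ℝ≥0∞} {t t' : ℝ}

lemma measure_lt_toReal_rpow_neg_le (ht : 0 < t) (h : ∀ c, ν {a | g a ≤ c} ≤ c) {x : ℝ}
    (hx : 0 < x) :
    ν {a | x < (g a).toReal ^ (-(1 / t))} ≤ ENNReal.ofReal (x ^ (-t)) := by
  refine (measure_mono fun a ha => ?_).trans (h _)
  rw [mem_ofPred_eq] at ha ⊢
  have hga : 0 < (g a).toReal := by
    refine ENNReal.toReal_nonneg.lt_of_ne' fun h0 => ?_
    rw [h0, Real.zero_rpow (neg_ne_zero.2 (by positivity))] at ha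
    exact ha.not_gt hx
  rw [← ENNReal.ofReal_toReal (ENNReal.toReal_pos_iff.1 hga).2.ne]
  apply ENNReal.ofReal_le_ofReal
  calc (g a).toReal = ((g a).toReal ^ (-(1 / t))) ^ (-t) := by
        rw [← Real.rpow_mul hga.le, neg_mul_neg, one_div_mul_cancel ht.ne', Real.rpow_one]
    _ ≤ x ^ (-t) := Real.rpow_le_rpow_of_nonpos hx ha.le (neg_nonpos.2 ht.le)

lemma lintegral_rpow_neg_eq_lintegral_meas_lt {b : ℝ} (hb : 0 < b) (hg : AEMeasurable g ν)
    (hg0 : ∀ᵐ a ∂ν, g a ≠ 0) :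
    ∫⁻ a, g a ^ (-b) ∂ν = ∫⁻ x in Ioi 0, ν {a | x < (g a).toReal ^ (-b)} := by
  rw [← lintegral_eq_lintegral_meas_lt ν (ae_of_all _ fun _ => by positivity)
    (hg.ennreal_toReal.pow_const _)]
  refine lintegral_congr_ae (hg0.mono fun a ha => ?_)
  have hne : g a ^ (-b) ≠ ⊤ := by
    simp [ENNReal.rpow_eq_top_iff, ha, hb.not_gt]
  simp only [ENNReal.toReal_rpow, ENNReal.ofReal_toReal hne]

lemma lintegral_rpow_neg_le_of_measure_sublevel_le (ht : t.HolderConjugate t')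
    (hg : AEMeasurable g ν) (h : ∀ c, ν {a | g a ≤ c} ≤ c) :
    ∫⁻ a, g a ^ (-(1 / t)) ∂ν ≤ ENNReal.ofReal t' * ν univ ^ (1 / t') := by
  rcases eq_or_ne (ν univ) 0 with hzero | hzero
  · simp [Measure.measure_univ_eq_zero.1 hzero]
  rcases eq_or_ne (ν univ) ⊤ with htop | htop
  · simp [htop, ht.symm.pos]
  set V := (ν univ).toReal
  have hV : 0 < V := ENNReal.toReal_pos hzero htop
  have hνV : ν univ = ENNReal.ofReal V := (ENNReal.ofReal_toReal htop).symm
  -- `c` is the crossing point of the two bounds `V` and `x ^ (-t)` on the distribution function.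
  set c := V ^ (-(1 / t))
  have hc : 0 < c := Real.rpow_pos_of_pos hV _
  have hg0 : ∀ᵐ a ∂ν, g a ≠ 0 := by simpa [ae_iff] using h 0
  rw [lintegral_rpow_neg_eq_lintegral_meas_lt ht.one_div_pos hg hg0, ← Ioc_union_Ioi_eq_Ioi hc.le,
    lintegral_union measurableSet_Ioi (Ioc_disjoint_Ioi le_rfl)]
  calc (∫⁻ x in Ioc 0 c, ν {a | x < (g a).toReal ^ (-(1 / t))}) +
        ∫⁻ x in Ioi c, ν {a | x < (g a).toReal ^ (-(1 / t))}
      ≤ (∫⁻ _ in Ioc 0 c, ENNReal.ofReal V) + ∫⁻ x in Ioi c, ENNReal.ofReal (x ^ (-t)) := by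
        refine add_le_add (lintegral_mono fun x => hνV ▸ measure_mono (subset_univ _))
          (setLIntegral_mono (by fun_prop) fun x hx => ?_)
        exact measure_lt_toReal_rpow_neg_le ht.pos h (hc.trans hx)
    _ = ENNReal.ofReal (t' * V ^ (1 / t')) := by
        rw [setLIntegral_const, Real.volume_Ioc, sub_zero, ← ENNReal.ofReal_mul hV.le,
          ofReal_add_lintegral_Ioi_rpow_neg ht hV]
    _ = ENNReal.ofReal t' * ν univ ^ (1 / t') := by
        rw [ENNReal.ofReal_mul ht.symm.nonneg, hνV, ENNReal.ofReal_rpow_of_pos hV]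

variable [LinearOrder α] [TopologicalSpace α] [OrderTopology α] [BorelSpace α] {μ : Measure α}

lemma measurable_measure_Iic_s8 : Measurable fun x => μ (Iic x) :=
  Monotone.measurable fun _ _ hab => measure_mono (Iic_subset_Iic.2 hab)

lemma measurable_measure_Iio : Measurable fun x => μ (Iio x) :=
  Monotone.measurable fun _ _ hab => measure_mono (Iio_subset_Iio hab)

variable [SecondCountableTopology α]

lemma setLIntegral_measure_Iic_rpow_neg_le (ht : t.HolderConjugate t') (A : Set α) :
    ∫⁻ x in A, μ (Iic x) ^ (-(1 / t)) ∂μ ≤ ENNReal.ofReal t' * μ A ^ (1 / t') := by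
  simpa using lintegral_rpow_neg_le_of_measure_sublevel_le (ν := μ.restrict A) ht
    measurable_measure_Iic_s8.aemeasurable fun c => (Measure.restrict_apply_le _ _).trans
      (measure_le_of_forall_measure_Iic_le fun _ hk => hk)

lemma setLIntegral_measure_Ici_rpow_neg_le (ht : t.HolderConjugate t') (A : Set α) :
    ∫⁻ x in A, μ (Ici x) ^ (-(1 / t)) ∂μ ≤ ENNReal.ofReal t' * μ A ^ (1 / t') :=
  setLIntegral_measure_Iic_rpow_neg_le (α := αᵒᵈ) ht A

end NegativePowers

section Minkowski

lemma le_rpow_of_le_mul_rpow {a a' : ℝ} (ha : a.HolderConjugate a') {I R : ℝ≥0∞} (hI : I ≠ ⊤)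
    (h : I ≤ R * I ^ (1 / a')) : I ≤ R ^ a := by
  rcases eq_or_ne I 0 with rfl | hI0
  · exact zero_le
  have hsplit : I ^ (1 / a) * I ^ (1 / a') = I := by
    rw [← ENNReal.rpow_add _ _ hI0 hI, one_div, one_div, ha.inv_add_inv_eq_one, ENNReal.rpow_one]
  have hroot : I ^ (1 / a) ≤ R := by
    rwa [← ENNReal.mul_le_mul_iff_left (ENNReal.rpow_pos (pos_iff_ne_zero.2 hI0) hI).ne'
      (ENNReal.rpow_ne_top_of_ne_zero hI0 hI), hsplit]
  rwa [one_div, ENNReal.rpow_inv_le_iff ha.pos] at hroot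

lemma exists_measurable_le_lt_lintegral_rpow {β : Type*} [MeasurableSpace β] {ν : Measure β}
    [SigmaFinite ν] {a : ℝ} (ha : 0 < a) {G : β → ℝ≥0∞} {L : ℝ≥0∞} (hL : L < ∫⁻ r, G r ^ a ∂ν) :
    ∃ h : β → ℝ≥0∞, Measurable h ∧ h ≤ G ∧ ∫⁻ r, h r ^ a ∂ν ≠ ⊤ ∧ L < ∫⁻ r, h r ^ a ∂ν := by
  simp only [lintegral_eq_nnreal, lt_iSup_iff] at hL
  obtain ⟨φ, hφG, hφ⟩ := hL
  rw [← SimpleFunc.lintegral_eq_lintegral] at hφ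
  obtain ⟨ψ, hψφ, hψtop, hψL⟩ :=
    SimpleFunc.exists_lt_lintegral_simpleFunc_of_lt_lintegral (f := φ) hφ
  have hpow : ∀ r, ((ψ r : ℝ≥0∞) ^ (a⁻¹)) ^ a = ψ r := fun r => ENNReal.rpow_inv_rpow ha.ne' _
  refine ⟨fun r => (ψ r : ℝ≥0∞) ^ (a⁻¹), by fun_prop, fun r => ?_, ?_, ?_⟩
  · exact (ENNReal.rpow_inv_le_iff ha).2 ((ENNReal.coe_le_coe.2 (hψφ r)).trans (hφG r))
  · simpa only [hpow] using hψtop.ne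
  · simpa only [hpow] using hψL

variable {α β : Type*} [MeasurableSpace α] [MeasurableSpace β] {μ : Measure α} {ν : Measure β}
  [SFinite μ]

lemma lintegral_lintegral_mul_le_lintegral_Lp_mul_Lq [SFinite ν] {a a' : ℝ}
    (ha : a.HolderConjugate a') {F : β → α → ℝ≥0∞} (hF : Measurable (Function.uncurry F))
    {h : β → ℝ≥0∞} (hh : Measurable h) :
    ∫⁻ r, (∫⁻ s, F r s ∂μ) * h r ∂ν ≤
      (∫⁻ s, (∫⁻ r, F r s ^ a ∂ν) ^ (1 / a) ∂μ) * (∫⁻ r, h r ^ a' ∂ν) ^ (1 / a') :=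
  calc ∫⁻ r, (∫⁻ s, F r s ∂μ) * h r ∂ν
      = ∫⁻ r, ∫⁻ s, F r s * h r ∂μ ∂ν :=
        lintegral_congr fun _ => (lintegral_mul_const _ hF.of_uncurry_left).symm
    _ = ∫⁻ s, ∫⁻ r, F r s * h r ∂ν ∂μ :=
        lintegral_lintegral_swap (hF.mul (hh.comp measurable_fst)).aemeasurable
    _ ≤ ∫⁻ s, (∫⁻ r, F r s ^ a ∂ν) ^ (1 / a) * (∫⁻ r, h r ^ a' ∂ν) ^ (1 / a') ∂μ :=
        lintegral_mono fun _ => ENNReal.lintegral_mul_le_Lp_mul_Lq ν ha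
          hF.of_uncurry_right.aemeasurable hh.aemeasurable
    _ = (∫⁻ s, (∫⁻ r, F r s ^ a ∂ν) ^ (1 / a) ∂μ) * (∫⁻ r, h r ^ a' ∂ν) ^ (1 / a') :=
        lintegral_mul_const _ ((hF.pow_const a).lintegral_prod_left'.pow_const _)

variable [SigmaFinite ν]

theorem lintegral_rpow_lintegral_le_rpow_lintegral {a : ℝ} (ha : 1 ≤ a) {F : β → α → ℝ≥0∞}
    (hF : Measurable (Function.uncurry F)) :
    ∫⁻ r, (∫⁻ s, F r s ∂μ) ^ a ∂ν ≤ (∫⁻ s, (∫⁻ r, F r s ^ a ∂ν) ^ (1 / a) ∂μ) ^ a := by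
  rcases ha.eq_or_lt with rfl | ha
  · simpa only [ENNReal.rpow_one, div_one] using
      (lintegral_lintegral_swap (μ := ν) (ν := μ) hF.aemeasurable).le
  have hconj : a.HolderConjugate (Real.conjExponent a) := .conjExponent ha
  refine le_of_forall_lt fun L hL => ?_
  -- Hölder against `h ^ (a - 1)` bounds `∫ h ^ a` by a power of itself, which cancels if finite.
  obtain ⟨h, hh, hle, hfin, hLh⟩ := exists_measurable_le_lt_lintegral_rpow hconj.pos hL
  refine hLh.trans_le (le_rpow_of_le_mul_rpow hconj hfin ?_)
  have hsplit : ∀ r, h r ^ a = h r * h r ^ (a - 1) := fun r => by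
    nth_rw 2 [← ENNReal.rpow_one (h r)]
    rw [← ENNReal.rpow_add_of_nonneg _ _ zero_le_one hconj.sub_one_pos.le, add_sub_cancel]
  have hpow : ∀ r, (h r ^ (a - 1)) ^ Real.conjExponent a = h r ^ a := fun r => by
    rw [← ENNReal.rpow_mul, hconj.sub_one_mul_conj]
  calc ∫⁻ r, h r ^ a ∂ν
      ≤ ∫⁻ r, (∫⁻ s, F r s ∂μ) * h r ^ (a - 1) ∂ν :=
        lintegral_mono fun r => by simpa only [hsplit] using mul_le_mul_left (hle r) _
    _ ≤ _ := lintegral_lintegral_mul_le_lintegral_Lp_mul_Lq hconj hF (hh.pow_const _)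
    _ = _ := by simp only [hpow]

end Minkowski

section Triangular

variable {α : Type*} [LinearOrder α] [TopologicalSpace α] [OrderClosedTopology α]
  [SecondCountableTopology α] [MeasurableSpace α] [OpensMeasurableSpace α]

theorem lintegral_rpow_mul_setLIntegral_Iio_le {μ ν : Measure α} [SFinite μ] [SigmaFinite ν]
    {a : ℝ} (ha : 1 ≤ a) {u g : α → ℝ≥0∞} (hu : Measurable u) (hg : Measurable g) :
    ∫⁻ r, (u r * ∫⁻ s in Iio r, g s ∂μ) ^ a ∂ν ≤
      (∫⁻ s, g s * (∫⁻ r in Ioi s, u r ^ a ∂ν) ^ (1 / a) ∂μ) ^ a := by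
  have ha0 : 0 < a := zero_lt_one.trans_le ha
  set F : α → α → ℝ≥0∞ := fun r s =>
    {z : α × α | z.2 < z.1}.indicator (fun z => u z.1 * g z.2) (r, s)
  have hF : Measurable (Function.uncurry F) :=
    ((hu.comp measurable_fst).mul (hg.comp measurable_snd)).indicator
      (measurableSet_lt measurable_snd measurable_fst)
  have hrow : ∀ r, ∫⁻ s, F r s ∂μ = u r * ∫⁻ s in Iio r, g s ∂μ := fun r => by
    rw [← lintegral_const_mul _ hg, ← lintegral_indicator measurableSet_Iio]
    rfl
  have hcol : ∀ s, (∫⁻ r, F r s ^ a ∂ν) ^ (1 / a) =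
      g s * (∫⁻ r in Ioi s, u r ^ a ∂ν) ^ (1 / a) := fun s => by
    have hpow : ∀ r, F r s ^ a = (Ioi s).indicator (fun r => u r ^ a * g s ^ a) r := fun r => by
      by_cases hsr : s < r <;> simp [F, hsr, ENNReal.mul_rpow_of_nonneg, ha0, ha0.le]
    simp only [hpow]
    rw [lintegral_indicator measurableSet_Ioi, lintegral_mul_const _ (hu.pow_const _),
      ENNReal.mul_rpow_of_nonneg _ _ (by positivity), one_div, ENNReal.rpow_rpow_inv ha0.ne',
      mul_comm]
  simpa only [hrow, hcol] using lintegral_rpow_lintegral_le_rpow_lintegral (μ := μ) (ν := ν) ha hF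

end Triangular

section Hardy

lemma lintegral_le_Lp_mul_weight_mul_Lq_weight_neg {α : Type*} [MeasurableSpace α] {μ : Measure α}
    {p p' : ℝ} (hp : p.HolderConjugate p') {f w : α → ℝ≥0∞} (hf : AEMeasurable f μ)
    (hw : AEMeasurable w μ) (hw0 : ∀ᵐ s ∂μ, w s ≠ 0) (hwtop : ∀ᵐ s ∂μ, w s ≠ ⊤) :
    ∫⁻ s, f s ∂μ ≤
      (∫⁻ s, (f s * w s) ^ p ∂μ) ^ (1 / p) * (∫⁻ s, w s ^ (-p') ∂μ) ^ (1 / p') := by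
  have hcancel : ∫⁻ s, f s ∂μ = ∫⁻ s, (f s * w s) * (w s)⁻¹ ∂μ := by
    refine lintegral_congr_ae ?_
    filter_upwards [hw0, hwtop] with s h0 htop
    rw [ENNReal.mul_inv_cancel_right h0 htop]
  simp only [ENNReal.rpow_neg, ← ENNReal.inv_rpow]
  rw [hcancel]
  exact ENNReal.lintegral_mul_le_Lp_mul_Lq μ hp (hf.mul hw) hw.inv

variable {α : Type*} [LinearOrder α] [TopologicalSpace α] [OrderTopology α]
  [SecondCountableTopology α] [MeasurableSpace α] {μ ν : Measure α} {p p' q t t' : ℝ} {B : ℝ≥0∞}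

lemma measure_Ioi_rpow_mul_measure_Iic_rpow_le (hq : 0 < q) (hp' : 0 < p') (hBtop : B ≠ ⊤)
    (hB : ∀ r, ν (Ici r) ^ (1 / q) * μ (Iio r) ^ (1 / p') ≤ B) (s : α) :
    ν (Ioi s) ^ (1 / q) * μ (Iic s) ^ (1 / p') ≤ B := by
  rcases eq_or_ne (μ (Iic s)) 0 with h0 | h0
  · simp [h0, hp']
  have hμ0 : μ (Iic s) ^ (1 / p') ≠ 0 := by
    rwa [Ne, ENNReal.rpow_eq_zero_iff_of_pos (by positivity)]
  rw [← ENNReal.le_div_iff_mul_le (.inl hμ0) (.inr hBtop), one_div q, ENNReal.rpow_inv_le_iff hq]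
  refine measure_le_of_forall_measure_Ici_le fun k hk => ?_
  rw [← ENNReal.rpow_inv_le_iff hq, ← one_div, ENNReal.le_div_iff_mul_le (.inl hμ0) (.inr hBtop)]
  calc ν (Ici k) ^ (1 / q) * μ (Iic s) ^ (1 / p')
      ≤ ν (Ici k) ^ (1 / q) * μ (Iio k) ^ (1 / p') := by gcongr; exact hk
    _ ≤ B := hB k

lemma ae_measure_Iio_rpow_le_mul_measure_Ici_rpow_neg (hq : 0 < q) (hBtop : B ≠ ⊤)
    (hB : ∀ r, ν (Ici r) ^ (1 / q) * μ (Iio r) ^ (1 / p') ≤ B) :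
    ∀ᵐ r ∂ν, μ (Iio r) ^ (1 / p') ≤ B * ν (Ici r) ^ (-(1 / q)) := by
  filter_upwards [ae_measure_Ici_ne_zero_s8 (μ := ν)] with r hr
  have hν0 : ν (Ici r) ^ (1 / q) ≠ 0 := by
    rwa [Ne, ENNReal.rpow_eq_zero_iff_of_pos (by positivity)]
  rw [ENNReal.rpow_neg, ← div_eq_mul_inv, ENNReal.le_div_iff_mul_le (.inl hν0) (.inr hBtop),
    mul_comm]
  exact hB r

lemma ae_measure_Iio_ne_top (hq : 0 < q) (hp' : 0 < p') (hBtop : B ≠ ⊤)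
    (hB : ∀ r, ν (Ici r) ^ (1 / q) * μ (Iio r) ^ (1 / p') ≤ B) : ∀ᵐ r ∂ν, μ (Iio r) ≠ ⊤ := by
  filter_upwards [ae_measure_Ici_ne_zero_s8 (μ := ν)] with r hr htop
  have hν0 : ν (Ici r) ^ (1 / q) ≠ 0 := by
    rwa [Ne, ENNReal.rpow_eq_zero_iff_of_pos (by positivity)]
  have := hB r
  rw [htop, ENNReal.top_rpow_of_pos (by positivity), ENNReal.mul_top hν0] at this
  exact hBtop (top_le_iff.1 this)

variable [BorelSpace α]

lemma setLIntegral_Iio_le_mul_Lp_measure_Iic_rpow (hp : p.HolderConjugate p')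
    (ht : t.HolderConjugate t') {f : α → ℝ≥0∞} (hf : Measurable f) {r : α} (hr : μ (Iio r) ≠ ⊤) :
    ∫⁻ s in Iio r, f s ∂μ ≤
      (∫⁻ s in Iio r, (f s * μ (Iic s) ^ (1 / (t * p'))) ^ p ∂μ) ^ (1 / p) *
        (ENNReal.ofReal t' * μ (Iio r) ^ (1 / t')) ^ (1 / p') := by
  have ht0 := ht.pos
  have hp0 := hp.symm.pos
  have hw0 : ∀ᵐ s ∂μ.restrict (Iio r), μ (Iic s) ^ (1 / (t * p')) ≠ 0 := by
    filter_upwards [ae_restrict_of_ae (ae_measure_Iic_ne_zero_s8 (μ := μ))] with s hs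
    rwa [Ne, ENNReal.rpow_eq_zero_iff_of_pos (by positivity)]
  have hwtop : ∀ᵐ s ∂μ.restrict (Iio r), μ (Iic s) ^ (1 / (t * p')) ≠ ⊤ := by
    filter_upwards [ae_restrict_mem measurableSet_Iio] with s hs
    exact ENNReal.rpow_ne_top_of_nonneg (by positivity)
      (measure_ne_top_of_subset (Iic_subset_Iio.2 hs) hr)
  have hpow : ∀ s, (μ (Iic s) ^ (1 / (t * p'))) ^ (-p') = μ (Iic s) ^ (-(1 / t)) := fun s => by
    rw [← ENNReal.rpow_mul]
    congr 1
    field_simp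
  refine (lintegral_le_Lp_mul_weight_mul_Lq_weight_neg hp hf.aemeasurable
    (measurable_measure_Iic_s8.pow_const _).aemeasurable hw0 hwtop).trans ?_
  simp only [hpow]
  gcongr
  exact setLIntegral_measure_Iic_rpow_neg_le ht _

lemma setLIntegral_Ioi_measure_Iio_rpow_le (hq : 0 < q) (ht : t.HolderConjugate t')
    (hBtop : B ≠ ⊤) (hB : ∀ r, ν (Ici r) ^ (1 / q) * μ (Iio r) ^ (1 / p') ≤ B) (s : α) :
    ∫⁻ r in Ioi s, μ (Iio r) ^ (q / (t' * p')) ∂ν ≤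
      B ^ (q / t') * (ENNReal.ofReal t * ν (Ioi s) ^ (1 / t)) := by
  have ht'0 := ht.symm.pos
  have hpointwise : ∀ᵐ r ∂ν, μ (Iio r) ^ (q / (t' * p')) ≤
      B ^ (q / t') * ν (Ici r) ^ (-(1 / t')) := by
    filter_upwards [ae_measure_Iio_rpow_le_mul_measure_Ici_rpow_neg hq hBtop hB] with r hr
    calc μ (Iio r) ^ (q / (t' * p')) = (μ (Iio r) ^ (1 / p')) ^ (q / t') := by
          rw [← ENNReal.rpow_mul]
          congr 1
          field_simp
      _ ≤ (B * ν (Ici r) ^ (-(1 / q))) ^ (q / t') := by gcongr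
      _ = B ^ (q / t') * ν (Ici r) ^ (-(1 / t')) := by
          rw [ENNReal.mul_rpow_of_nonneg _ _ (by positivity), ← ENNReal.rpow_mul]
          congr 2
          field_simp
  calc ∫⁻ r in Ioi s, μ (Iio r) ^ (q / (t' * p')) ∂ν
      ≤ ∫⁻ r in Ioi s, B ^ (q / t') * ν (Ici r) ^ (-(1 / t')) ∂ν :=
        lintegral_mono_ae (ae_restrict_of_ae hpointwise)
    _ = B ^ (q / t') * ∫⁻ r in Ioi s, ν (Ici r) ^ (-(1 / t')) ∂ν :=
        lintegral_const_mul' _ _ (ENNReal.rpow_ne_top_of_nonneg (by positivity) hBtop)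
    _ ≤ B ^ (q / t') * (ENNReal.ofReal t * ν (Ioi s) ^ (1 / t)) := by
        gcongr
        exact setLIntegral_measure_Ici_rpow_neg_le ht.symm _

lemma measure_Iic_rpow_mul_setLIntegral_Ioi_rpow_le_s8 (hq : 0 < q) (hp' : 0 < p')
    (ht : t.HolderConjugate t') (hBtop : B ≠ ⊤)
    (hB : ∀ r, ν (Ici r) ^ (1 / q) * μ (Iio r) ^ (1 / p') ≤ B) (s : α) :
    μ (Iic s) ^ (1 / (t * p')) * (∫⁻ r in Ioi s, μ (Iio r) ^ (q / (t' * p')) ∂ν) ^ (1 / q) ≤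
      ENNReal.ofReal t ^ (1 / q) * B := by
  have ht0 := ht.pos
  have ht'0 := ht.symm.pos
  have hμ : μ (Iic s) ^ (1 / (t * p')) = (μ (Iic s) ^ (1 / p')) ^ (1 / t) := by
    rw [← ENNReal.rpow_mul]
    congr 1
    field_simp
  have hν : (B ^ (q / t') * (ENNReal.ofReal t * ν (Ioi s) ^ (1 / t))) ^ (1 / q) =
      ENNReal.ofReal t ^ (1 / q) * (B ^ (1 / t') * (ν (Ioi s) ^ (1 / q)) ^ (1 / t)) := by
    rw [ENNReal.mul_rpow_of_nonneg _ _ (by positivity),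
      ENNReal.mul_rpow_of_nonneg _ _ (by positivity), ← ENNReal.rpow_mul, ← ENNReal.rpow_mul,
      ← ENNReal.rpow_mul, mul_comm (1 / t), show q / t' * (1 / q) = 1 / t' by field_simp]
    ring
  calc μ (Iic s) ^ (1 / (t * p')) * (∫⁻ r in Ioi s, μ (Iio r) ^ (q / (t' * p')) ∂ν) ^ (1 / q)
      ≤ (μ (Iic s) ^ (1 / p')) ^ (1 / t) *
          (ENNReal.ofReal t ^ (1 / q) * (B ^ (1 / t') * (ν (Ioi s) ^ (1 / q)) ^ (1 / t))) := by
        rw [hμ, ← hν]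
        gcongr
        exact setLIntegral_Ioi_measure_Iio_rpow_le hq ht hBtop hB s
    _ = ENNReal.ofReal t ^ (1 / q) *
          (B ^ (1 / t') * (ν (Ioi s) ^ (1 / q) * μ (Iic s) ^ (1 / p')) ^ (1 / t)) := by
        rw [ENNReal.mul_rpow_of_nonneg _ _ (by positivity)]
        ring
    _ ≤ ENNReal.ofReal t ^ (1 / q) * (B ^ (1 / t') * B ^ (1 / t)) := by
        gcongr
        exact measure_Ioi_rpow_mul_measure_Iic_rpow_le hq hp' hBtop hB s
    _ = ENNReal.ofReal t ^ (1 / q) * B := by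
        rw [← ENNReal.rpow_add_of_nonneg _ _ (by positivity) (by positivity),
          ht.symm.one_div_add_one_div, div_one, ENNReal.rpow_one]

lemma rpow_setLIntegral_Iio_le_mul_rpow (hp : p.HolderConjugate p') (hq : 0 < q)
    (ht : t.HolderConjugate t') {f : α → ℝ≥0∞} (hf : Measurable f) {r : α} (hr : μ (Iio r) ≠ ⊤) :
    (∫⁻ s in Iio r, f s ∂μ) ^ q ≤ ENNReal.ofReal t' ^ (q / p') *
      (μ (Iio r) ^ (p / (t' * p')) *
        ∫⁻ s in Iio r, (f s * μ (Iic s) ^ (1 / (t * p'))) ^ p ∂μ) ^ (q / p) := by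
  have hp0 := hp.pos
  have hp'0 := hp.symm.pos
  have ht'0 := ht.symm.pos
  refine (ENNReal.rpow_le_rpow
    (setLIntegral_Iio_le_mul_Lp_measure_Iic_rpow hp ht hf hr) hq.le).trans_eq ?_
  generalize ∫⁻ s in Iio r, (f s * μ (Iic s) ^ (1 / (t * p'))) ^ p ∂μ = J
  simp (discharger := positivity) only [ENNReal.mul_rpow_of_nonneg, ← ENNReal.rpow_mul]
  rw [show 1 / p * q = q / p by ring, show 1 / p' * q = q / p' by ring,
    show p / (t' * p') * (q / p) = 1 / t' * (1 / p') * q by field_simp]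
  ring

lemma rpow_mul_rpow_setLIntegral_Ioi_le (hp : 0 < p) (hp' : 0 < p') (hq : 0 < q)
    (ht : t.HolderConjugate t') (hBtop : B ≠ ⊤)
    (hB : ∀ r, ν (Ici r) ^ (1 / q) * μ (Iio r) ^ (1 / p') ≤ B) (y : ℝ≥0∞) (s : α) :
    (y * μ (Iic s) ^ (1 / (t * p'))) ^ p *
        (∫⁻ r in Ioi s, (μ (Iio r) ^ (p / (t' * p'))) ^ (q / p) ∂ν) ^ (1 / (q / p)) ≤
      (ENNReal.ofReal t ^ (1 / q) * B) ^ p * y ^ p := by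
  have hpow : ∀ r, (μ (Iio r) ^ (p / (t' * p'))) ^ (q / p) = μ (Iio r) ^ (q / (t' * p')) :=
    fun r => by
      rw [← ENNReal.rpow_mul]
      congr 1
      field_simp
  simp only [hpow]
  rw [show 1 / (q / p) = 1 / q * p by field_simp, ENNReal.rpow_mul _ (1 / q),
    ← ENNReal.mul_rpow_of_nonneg _ _ hp.le, ← ENNReal.mul_rpow_of_nonneg _ _ hp.le, mul_assoc,
    mul_comm _ y]
  refine ENNReal.rpow_le_rpow (mul_le_mul_right ?_ y) hp.le
  exact measure_Iic_rpow_mul_setLIntegral_Ioi_rpow_le_s8 hq hp' ht hBtop hB s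

variable [SFinite μ] [SigmaFinite ν] {f : α → ℝ≥0∞}

lemma lintegral_rpow_setLIntegral_Iio_le_rpow (hp : p.HolderConjugate p') (hpq : p ≤ q)
    (ht : t.HolderConjugate t') (hBtop : B ≠ ⊤)
    (hB : ∀ r, ν (Ici r) ^ (1 / q) * μ (Iio r) ^ (1 / p') ≤ B) (hf : Measurable f) :
    ∫⁻ r, (∫⁻ s in Iio r, f s ∂μ) ^ q ∂ν ≤
      (ENNReal.ofReal t' ^ (1 / p') * ENNReal.ofReal t ^ (1 / q) * B *
        (∫⁻ s, f s ^ p ∂μ) ^ (1 / p)) ^ q := by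
  have hp0 := hp.pos
  have hp'0 := hp.symm.pos
  have hq0 : 0 < q := hp0.trans_le hpq
  set T := ENNReal.ofReal t
  set T' := ENNReal.ofReal t'
  set u : α → ℝ≥0∞ := fun r => μ (Iio r) ^ (p / (t' * p'))
  set w : α → ℝ≥0∞ := fun s => μ (Iic s) ^ (1 / (t * p'))
  have hu : Measurable u := measurable_measure_Iio.pow_const _
  have hw : Measurable w := measurable_measure_Iic_s8.pow_const _
  calc ∫⁻ r, (∫⁻ s in Iio r, f s ∂μ) ^ q ∂ν
      ≤ ∫⁻ r, T' ^ (q / p') * (u r * ∫⁻ s in Iio r, (f s * w s) ^ p ∂μ) ^ (q / p) ∂ν :=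
        lintegral_mono_ae ((ae_measure_Iio_ne_top hq0 hp'0 hBtop hB).mono fun r hr =>
          rpow_setLIntegral_Iio_le_mul_rpow hp hq0 ht hf hr)
    _ = T' ^ (q / p') * ∫⁻ r, (u r * ∫⁻ s in Iio r, (f s * w s) ^ p ∂μ) ^ (q / p) ∂ν :=
        lintegral_const_mul' _ _
          (ENNReal.rpow_ne_top_of_nonneg (by positivity) ENNReal.ofReal_ne_top)
    _ ≤ T' ^ (q / p') * (∫⁻ s, (f s * w s) ^ p *
          (∫⁻ r in Ioi s, u r ^ (q / p) ∂ν) ^ (1 / (q / p)) ∂μ) ^ (q / p) := by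
        gcongr
        exact lintegral_rpow_mul_setLIntegral_Iio_le ((one_le_div hp0).2 hpq) hu
          ((hf.mul hw).pow_const p)
    _ ≤ T' ^ (q / p') * (∫⁻ s, (T ^ (1 / q) * B) ^ p * f s ^ p ∂μ) ^ (q / p) := by
        refine mul_le_mul_right
          (ENNReal.rpow_le_rpow (lintegral_mono fun s => ?_) (by positivity)) _
        exact rpow_mul_rpow_setLIntegral_Ioi_le hp0 hp'0 hq0 ht hBtop hB (f s) s
    _ = (T' ^ (1 / p') * T ^ (1 / q) * B * (∫⁻ s, f s ^ p ∂μ) ^ (1 / p)) ^ q := by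
        rw [lintegral_const_mul _ (hf.pow_const p)]
        simp (discharger := positivity) only [ENNReal.mul_rpow_of_nonneg, ← ENNReal.rpow_mul]
        rw [show 1 / p' * q = q / p' by ring, show 1 / q * p * (q / p) = 1 / q * q by field_simp,
          show p * (q / p) = q by field_simp, show 1 / p * q = q / p by ring]
        ring

theorem rpow_lintegral_rpow_setLIntegral_Iio_le (hp : p.HolderConjugate p') (hpq : p ≤ q)
    (ht : t.HolderConjugate t') (hBtop : B ≠ ⊤)
    (hB : ∀ r, ν (Ici r) ^ (1 / q) * μ (Iio r) ^ (1 / p') ≤ B) (hf : Measurable f) :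
    (∫⁻ r, (∫⁻ s in Iio r, f s ∂μ) ^ q ∂ν) ^ (1 / q) ≤
      ENNReal.ofReal (t' ^ (1 / p') * t ^ (1 / q)) * B * (∫⁻ s, f s ^ p ∂μ) ^ (1 / p) := by
  have ht'0 := ht.symm.pos
  rw [ENNReal.ofReal_mul (by positivity), ← ENNReal.ofReal_rpow_of_pos ht.pos,
    ← ENNReal.ofReal_rpow_of_pos ht'0, one_div q,
    ENNReal.rpow_inv_le_iff (hp.pos.trans_le hpq), ← one_div]
  exact lintegral_rpow_setLIntegral_Iio_le_rpow hp hpq ht hBtop hB hf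

end Hardy

theorem hardy_inequality_compact_general {α : Type*} [LinearOrder α] [TopologicalSpace α]
    [OrderTopology α] [SecondCountableTopology α] [MeasurableSpace α] [BorelSpace α]
    {μ₁ μ₂ : Measure α} [SFinite μ₁] [SigmaFinite μ₂] {p q p' q' : ℝ}
    (hp : p.HolderConjugate p') (hq : q.HolderConjugate q') (hpq : p ≤ q) {B : ℝ≥0∞}
    (hB : B = ⨆ r, μ₂ (Ici r) ^ (1 / q) * μ₁ (Iio r) ^ (1 / p')) (hBfin : B ≠ ⊤)
    {f : α → ℝ≥0∞} (hf : Measurable f) :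
    (∫⁻ r, (∫⁻ s in Iio r, f s ∂μ₁) ^ q ∂μ₂) ^ (1 / q) ≤
      ENNReal.ofReal (min (p' ^ (1 / p') * p ^ (1 / q)) (q' ^ (1 / p') * q ^ (1 / q))) * B *
        (∫⁻ s, f s ^ p ∂μ₁) ^ (1 / p) := by
  have hBle : ∀ r, μ₂ (Ici r) ^ (1 / q) * μ₁ (Iio r) ^ (1 / p') ≤ B :=
    iSup_le_iff.1 hB.ge
  rcases min_choice (p' ^ (1 / p') * p ^ (1 / q)) (q' ^ (1 / p') * q ^ (1 / q)) with h | h <;>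
    rw [h]
  · exact rpow_lintegral_rpow_setLIntegral_Iio_le hp hpq hp hBfin hBle hf
  · exact rpow_lintegral_rpow_setLIntegral_Iio_le hp hpq hq hBfin hBle hf

/-- One-variable Hardy inequality for compactly supported finite Borel measures,
both possibly with atoms. -/
theorem hardy_inequality_compact
    (μ₁ μ₂ : Measure ℝ) [IsFiniteMeasure μ₁] [IsFiniteMeasure μ₂]
    (K₁ K₂ : Set ℝ) (hK₁ : IsCompact K₁) (hK₂ : IsCompact K₂)
    (hμ₁K : μ₁ K₁ᶜ = 0) (hμ₂K : μ₂ K₂ᶜ = 0)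
    (p q p' q' : ℝ) (hp : 1 < p) (hpq : p ≤ q)
    (hp' : p' = p / (p - 1)) (hq' : q' = q / (q - 1))
    (B : ℝ≥0∞)
    (hB : B = ⨆ r : ℝ, μ₂ (Set.Ici r) ^ (1 / q) * μ₁ (Set.Iio r) ^ (1 / p'))
    (hBfin : B ≠ ⊤) :
    ∀ f : ℝ → ℝ≥0∞, Measurable f →
      (∫⁻ r, (∫⁻ s in Set.Iio r, f s ∂μ₁) ^ q ∂μ₂) ^ (1 / q) ≤
        ENNReal.ofReal (min (p' ^ (1 / p') * p ^ (1 / q)) (q' ^ (1 / p') * q ^ (1 / q))) * B *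
          (∫⁻ s, f s ^ p ∂μ₁) ^ (1 / p) :=
  fun _ hf => hardy_inequality_compact_general
    ((Real.holderConjugate_iff_eq_conjExponent hp).2 hp')
    ((Real.holderConjugate_iff_eq_conjExponent (hp.trans_le hpq)).2 hq') hpq hB hBfin hf
end

section
/- Let μ be a finite Borel measure on ℝ and for n ∈ ℕ define μₙ := μ + Σ_{r∈ℝ} μ({r}) · (2ⁿ · λ|_{[r, r+2^{−n}]} − δ_r), where λ is Lebesgue measure, δ_r is the Dirac measure at r, and the sum runs over the (at most countably many) atoms of μ. Then: (a) each μₙ is a diffuse finite positive Borel measure; (b) μₙ((−∞,r)) ≤ μ((−∞,r)) for every r ∈ ℝ and n ∈ ℕ; (c) for every r ∈ ℝ and every continuous compactly supported function φ : ℝ → ℝ, ∫_{(−∞,r)} φ dμₙ → ∫_{(−∞,r)} φ dμ as n → ∞; in particular μₙ converges to μ in the vague topology. -/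
open MeasureTheory ENNReal Filter
open scoped NNReal Topology

/-!
For a locally finite measure on ℝ, spread each atom at `r` uniformly over `[r, r + ε]`. Mass only
moves to the right, which gives the comparison on half-lines. As `ε → 0`, the mean of a
right-continuous function over `[r, r + ε]` tends to its value at `r`. Dominated convergence for
the sum over the atoms then gives convergence of the integrals of right-continuous functions, and
the truncation of a continuous function to an open left half-line is right-continuous.
-/

open scoped ProbabilityTheory

section ReplaceAtoms

variable {α : Type*} [MeasurableSpace α]

/-- The measure obtained from `μ` by replacing each atom `μ {r} • δ_r` with `μ {r} • κ r`. To avoid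
subtracting measures, the diffuse part of `μ` is encoded as its restriction to the non-atoms. -/
noncomputable def replaceAtoms (μ : Measure α) (κ : α → Measure α) : Measure α :=
  μ.restrict {x | μ {x} = 0} + Measure.sum fun r : {r // μ {r} ≠ 0} => μ {(r : α)} • κ r

variable {μ : Measure α}

theorem replaceAtoms_apply {κ : α → Measure α} {s : Set α} (hs : MeasurableSet s) :
    replaceAtoms μ κ s =
      μ.restrict {x | μ {x} = 0} s + ∑' r : {r // μ {r} ≠ 0}, μ {(r : α)} * κ r s := by
  simp only [replaceAtoms, Measure.add_apply, Measure.sum_apply _ hs, Measure.smul_apply,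
    smul_eq_mul]

theorem lintegral_replaceAtoms (κ : α → Measure α) (f : α → ℝ≥0∞) :
    ∫⁻ x, f x ∂replaceAtoms μ κ =
      ∫⁻ x in {x | μ {x} = 0}, f x ∂μ +
        ∑' r : {r // μ {r} ≠ 0}, μ {(r : α)} * ∫⁻ x, f x ∂κ r := by
  simp only [replaceAtoms, lintegral_add_measure, lintegral_sum_measure, lintegral_smul_measure,
    smul_eq_mul]

theorem replaceAtoms_apply_mono {κ κ' : α → Measure α} {s : Set α} (hs : MeasurableSet s)
    (h : ∀ r, κ r s ≤ κ' r s) : replaceAtoms μ κ s ≤ replaceAtoms μ κ' s := by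
  rw [replaceAtoms_apply hs, replaceAtoms_apply hs]
  refine add_le_add_right (ENNReal.tsum_le_tsum fun r : {r // μ {r} ≠ 0} => ?_) _
  exact mul_le_mul_right (h r) _

theorem hasSum_integral_replaceAtoms {E : Type*} [NormedAddCommGroup E] [NormedSpace ℝ E]
    {κ : α → Measure α} {g : α → E} (hg : Integrable g (replaceAtoms μ κ)) :
    HasSum (fun r : {r // μ {r} ≠ 0} => μ.real {(r : α)} • ∫ x, g x ∂κ r)
      (∫ x, g x ∂replaceAtoms μ κ - ∫ x in {x | μ {x} = 0}, g x ∂μ) := by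
  obtain ⟨hg_diffuse, hg_atomic⟩ := integrable_add_measure.1 hg
  rw [replaceAtoms, integral_add_measure hg_diffuse hg_atomic, add_sub_cancel_left]
  simpa only [integral_smul_measure, Measure.real] using hasSum_integral_measure hg_atomic

variable [MeasurableSingletonClass α]

theorem nullSingletonClass_replaceAtoms {κ : α → Measure α} [∀ r, NullSingletonClass (κ r)] :
    NullSingletonClass (replaceAtoms μ κ) where
  measure_singleton x := by
    have hx : μ.restrict {x | μ {x} = 0} {x} = 0 := by
      rw [Measure.restrict_apply (measurableSet_singleton x)]
      by_cases h : μ {x} = 0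
      · exact measure_mono_null Set.inter_subset_left h
      · rw [Set.singleton_inter_eq_empty (s := {x | μ {x} = 0}).2 h, measure_empty]
    simp [replaceAtoms_apply (measurableSet_singleton x), hx]

variable [SFinite μ]

theorem countable_setOf_measure_singleton_ne_zero : {r | μ {r} ≠ 0}.Countable := by
  simpa only [pos_iff_ne_zero] using
    Measure.countable_meas_pos_of_disjoint_iUnion (μ := μ) (As := fun r : α => {r})
      measurableSet_singleton fun _ _ h => Set.disjoint_singleton.2 h

theorem replaceAtoms_dirac : replaceAtoms μ Measure.dirac = μ := by
  have hcount := countable_setOf_measure_singleton_ne_zero (μ := μ)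
  have : Countable {r // μ {r} ≠ 0} := hcount
  have hatoms : μ.restrict {x | μ {x} ≠ 0} =
      Measure.sum fun r : {r // μ {r} ≠ 0} => μ {(r : α)} • Measure.dirac (r : α) := by
    have hunion : {x | μ {x} ≠ 0} = ⋃ r : {r // μ {r} ≠ 0}, {(r : α)} := by ext; simp
    simp only [← Measure.restrict_singleton]
    rw [hunion]
    exact Measure.restrict_iUnion
      (fun r s h => Set.disjoint_singleton.2 (Subtype.coe_injective.ne h))
      fun r => measurableSet_singleton _
  have hcompl : {x | μ {x} = 0} = {x | μ {x} ≠ 0}ᶜ := by ext; simp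
  rw [replaceAtoms, ← hatoms, add_comm, hcompl]
  exact Measure.restrict_add_restrict_compl hcount.measurableSet

theorem replaceAtoms_univ {κ : α → Measure α} [∀ r, IsProbabilityMeasure (κ r)] :
    replaceAtoms μ κ Set.univ = μ Set.univ := by
  conv_rhs => rw [← replaceAtoms_dirac (μ := μ)]
  simp only [replaceAtoms_apply MeasurableSet.univ, measure_univ]

variable {E : Type*} [NormedAddCommGroup E]

theorem hasSum_measureReal_singleton_smul [NormedSpace ℝ E] [CompleteSpace E] {f : α → E}
    (hf : Integrable f μ) :
    HasSum (fun r : {r // μ {r} ≠ 0} => μ.real {(r : α)} • f r)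
      (∫ x, f x ∂μ - ∫ x in {x | μ {x} = 0}, f x ∂μ) := by
  rw [← replaceAtoms_dirac (μ := μ)] at hf
  simpa only [integral_dirac, replaceAtoms_dirac] using hasSum_integral_replaceAtoms hf

theorem integrable_replaceAtoms {κ : α → Measure α} [∀ r, IsZeroOrProbabilityMeasure (κ r)]
    {g : α → E} {bound : α → ℝ} (hg : StronglyMeasurable g) (hgμ : Integrable g μ)
    (hbound : Integrable bound μ) (hle : ∀ r, ∀ᵐ x ∂κ r, ‖g x‖ ≤ bound r) :
    Integrable g (replaceAtoms μ κ) := by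
  refine ⟨hg.aestronglyMeasurable, ?_⟩
  have hmean (r : α) : ∫⁻ x, ‖g x‖ₑ ∂κ r ≤ ‖bound r‖ₑ := calc
    ∫⁻ x, ‖g x‖ₑ ∂κ r ≤ ∫⁻ _, ‖bound r‖ₑ ∂κ r :=
      lintegral_mono_ae <| (hle r).mono fun x hx =>
        enorm_le_iff_norm_le.2 (hx.trans (Real.le_norm_self _))
    _ ≤ ‖bound r‖ₑ := by
      rw [lintegral_const]
      exact mul_le_of_le_one_right' prob_le_one
  have hbound' : ∫⁻ x, ‖bound x‖ₑ ∂replaceAtoms μ Measure.dirac < ∞ := by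
    rw [replaceAtoms_dirac]
    exact hbound.2
  rw [lintegral_replaceAtoms] at hbound'
  simp only [lintegral_dirac] at hbound'
  rw [HasFiniteIntegral, lintegral_replaceAtoms]
  refine ENNReal.add_lt_top.2 ⟨hgμ.restrict.2, lt_of_le_of_lt ?_ (ENNReal.add_lt_top.1 hbound').2⟩
  gcongr with r
  exact hmean r

theorem tendsto_integral_replaceAtoms [NormedSpace ℝ E] [CompleteSpace E] {ι : Type*} {l : Filter ι}
    {κ : ι → α → Measure α} [∀ i r, IsZeroOrProbabilityMeasure (κ i r)]
    {g : α → E} {bound : α → ℝ} (hg : StronglyMeasurable g) (hgμ : Integrable g μ)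
    (hbound : Integrable bound μ) (hle : ∀ᶠ i in l, ∀ r, ∀ᵐ x ∂κ i r, ‖g x‖ ≤ bound r)
    (hlim : ∀ r, Tendsto (fun i => ∫ x, g x ∂κ i r) l (𝓝 (g r))) :
    Tendsto (fun i => ∫ x, g x ∂replaceAtoms μ (κ i)) l (𝓝 (∫ x, g x ∂μ)) := by
  have hdom : ∀ᶠ i in l, ∀ r : {r // μ {r} ≠ 0},
      ‖μ.real {(r : α)} • ∫ x, g x ∂κ i r‖ ≤ μ.real {(r : α)} • ‖bound r‖ := by
    filter_upwards [hle] with i hi r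
    rw [norm_smul, Real.norm_of_nonneg measureReal_nonneg, smul_eq_mul]
    gcongr
    calc
      ‖∫ x, g x ∂κ i r‖ ≤ ‖bound r‖ * (κ i r).real Set.univ :=
        norm_integral_le_of_norm_le_const <|
          (hi r).mono fun x hx => hx.trans (Real.le_norm_self _)
      _ ≤ ‖bound r‖ := mul_le_of_le_one_right (norm_nonneg _) measureReal_le_one
  have htsum := tendsto_tsum_of_dominated_convergence
    (hasSum_measureReal_singleton_smul hbound.norm).summable
    (fun r => (hlim r).const_smul (μ.real {(r : α)})) hdom
  rw [(hasSum_measureReal_singleton_smul hgμ).tsum_eq] at htsum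
  rw [← tendsto_sub_const_iff (∫ x in {x | μ {x} = 0}, g x ∂μ)]
  refine htsum.congr' ?_
  filter_upwards [hle] with i hi
  exact (hasSum_integral_replaceAtoms (integrable_replaceAtoms hg hgμ hbound hi)).tsum_eq

end ReplaceAtoms

theorem tendsto_integral_cond {α E ι : Type*} [TopologicalSpace α] [MeasurableSpace α]
    [OpensMeasurableSpace α] [NormedAddCommGroup E] [NormedSpace ℝ E] [CompleteSpace E]
    {l : Filter ι} {ν : Measure α} [IsLocallyFiniteMeasure ν]
    {a : α} {t : Set α} {g : α → E} (hg : StronglyMeasurable g) (hga : ContinuousWithinAt g t a)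
    (ht : MeasurableSet t) {s : ι → Set α} (hs : Tendsto s l (𝓝[t] a).smallSets)
    (hs₀ : ∀ᶠ i in l, ν.real (s i) ≠ 0) :
    Tendsto (fun i => ∫ x, g x ∂ν[|s i]) l (𝓝 (g a)) := by
  have hlittle := hga.integral_sub_linear_isLittleO_ae (μ := ν) ht
    hg.stronglyMeasurableAtFilter hs
  rw [← tendsto_sub_nhds_zero_iff]
  refine hlittle.tendsto_inv_smul_nhds_zero.congr' ?_
  filter_upwards [hs₀] with i hi
  rw [ProbabilityTheory.cond, integral_smul_measure, ENNReal.toReal_inv, smul_sub,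
    inv_smul_smul₀ hi, Measure.real]

theorem cond_Icc_Iio_le_dirac {α : Type*} [Preorder α] [TopologicalSpace α] [OrderClosedTopology α]
    [MeasurableSpace α] [OpensMeasurableSpace α] (ν : Measure α) (a b x : α) :
    ν[|Set.Icc a b] (Set.Iio x) ≤ Measure.dirac a (Set.Iio x) := by
  by_cases h : a < x
  · rw [Measure.dirac_apply_of_mem (Set.mem_Iio.2 h)]
    exact prob_le_one
  · have hdisj : Set.Icc a b ∩ Set.Iio x = ∅ :=
      Set.eq_empty_of_forall_notMem fun y hy => h (hy.1.1.trans_lt hy.2)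
    rw [ProbabilityTheory.cond_apply measurableSet_Icc, hdisj, measure_empty, mul_zero]
    exact zero_le

theorem ofReal_smul_restrict_Icc_add_inv {c : ℝ} (hc : 0 < c) (r : ℝ) :
    ENNReal.ofReal c • volume.restrict (Set.Icc r (r + c⁻¹)) = volume[|Set.Icc r (r + c⁻¹)] := by
  rw [ProbabilityTheory.cond, Real.volume_Icc, add_sub_cancel_left, ENNReal.ofReal_inv_of_pos hc,
    inv_inv]

theorem continuousWithinAt_Ici_indicator_Iio {α E : Type*} [LinearOrder α] [TopologicalSpace α]
    [ClosedIciTopology α] [TopologicalSpace E] [Zero E] {φ : α → E} (hφ : Continuous φ) (r a : α) :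
    ContinuousWithinAt ((Set.Iio r).indicator φ) (Set.Ici a) a := by
  rcases lt_or_ge a r with har | hra
  · refine (hφ.continuousAt.congr ?_).continuousWithinAt
    filter_upwards [Iio_mem_nhds har] with y hy
    rw [Set.indicator_of_mem hy]
  · have hzero (y : α) (hy : y ∈ Set.Ici a) : (Set.Iio r).indicator φ y = 0 :=
      Set.indicator_of_notMem (Set.notMem_Iio.2 (hra.trans hy)) φ
    exact continuousWithinAt_const.congr hzero (hzero a Set.self_mem_Ici)

/-- The measure obtained from `μ` by spreading each atom uniformly over the interval of length `ε`
to its right. The uniform distribution is encoded as Lebesgue measure conditioned on the interval,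
which is the zero measure when `ε ≤ 0`. -/
noncomputable def smearAtoms (μ : Measure ℝ) (ε : ℝ) : Measure ℝ :=
  replaceAtoms μ fun r => volume[|Set.Icc r (r + ε)]

theorem smearAtoms_inv_two_pow (μ : Measure ℝ) (n : ℕ) :
    smearAtoms μ ((2 : ℝ) ^ n)⁻¹ = μ.restrict {x | μ {x} = 0} +
      Measure.sum fun r : {r : ℝ // μ {r} ≠ 0} =>
        μ {(r : ℝ)} • ((2 ^ n : ℝ≥0∞) •
          volume.restrict (Set.Icc (r : ℝ) ((r : ℝ) + ((2 : ℝ) ^ n)⁻¹))) := by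
  simp only [smearAtoms, replaceAtoms, ← ofReal_smul_restrict_Icc_add_inv (pow_pos two_pos n),
    ENNReal.ofReal_pow zero_le_two, ENNReal.ofReal_ofNat]

theorem smearAtoms_singleton (μ : Measure ℝ) (ε x : ℝ) : smearAtoms μ ε {x} = 0 := by
  have (r : ℝ) : NullSingletonClass (volume[|Set.Icc r (r + ε)] : Measure ℝ) :=
    ⟨fun y => ProbabilityTheory.cond_absolutelyContinuous (measure_singleton y)⟩
  exact nullSingletonClass_replaceAtoms.measure_singleton x

theorem smearAtoms_univ (μ : Measure ℝ) [SFinite μ] {ε : ℝ} (hε : 0 < ε) :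
    smearAtoms μ ε Set.univ = μ Set.univ := by
  have (r : ℝ) : IsProbabilityMeasure (volume[|Set.Icc r (r + ε)] : Measure ℝ) :=
    ProbabilityTheory.cond_isProbabilityMeasure_of_finite (by simpa using hε) (by simp)
  exact replaceAtoms_univ

theorem smearAtoms_Iio_le (μ : Measure ℝ) [SFinite μ] (ε r : ℝ) :
    smearAtoms μ ε (Set.Iio r) ≤ μ (Set.Iio r) := by
  conv_rhs => rw [← replaceAtoms_dirac (μ := μ)]
  exact replaceAtoms_apply_mono measurableSet_Iio fun a => cond_Icc_Iio_le_dirac volume a _ r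

section Convergence

variable {E : Type*} [NormedAddCommGroup E] [NormedSpace ℝ E] [CompleteSpace E]
  {ι : Type*} {l : Filter ι} {ε : ι → ℝ}

theorem tendsto_integral_cond_Icc_add {g : ℝ → E} {r : ℝ} (hg : StronglyMeasurable g)
    (hgr : ContinuousWithinAt g (Set.Ici r) r) (hε : Tendsto ε l (𝓝[>] 0)) :
    Tendsto (fun i => ∫ x, g x ∂volume[|Set.Icc r (r + ε i)]) l (𝓝 (g r)) := by
  have hpos : ∀ᶠ i in l, 0 < ε i := hε.eventually self_mem_nhdsWithin
  have hright : Tendsto (fun i => r + ε i) l (𝓝[≥] r) := by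
    refine tendsto_nhdsWithin_iff.2 ⟨?_, hpos.mono fun i hi => (lt_add_of_pos_right r hi).le⟩
    simpa using (tendsto_nhdsWithin_iff.1 hε).1.const_add r
  refine tendsto_integral_cond hg hgr measurableSet_Ici
    ((tendsto_const_nhdsWithin Set.self_mem_Ici).Icc hright) (hpos.mono fun i hi => ?_)
  simpa [hi.le] using hi.ne'

theorem tendsto_integral_smearAtoms (μ : Measure ℝ) [IsLocallyFiniteMeasure μ] {g : ℝ → E} {C : ℝ}
    (hg : StronglyMeasurable g) (hcont : ∀ r, ContinuousWithinAt g (Set.Ici r) r)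
    (hsupp : HasCompactSupport g) (hC : ∀ x, ‖g x‖ ≤ C) (hε : Tendsto ε l (𝓝[>] 0)) :
    Tendsto (fun i => ∫ x, g x ∂smearAtoms μ (ε i)) l (𝓝 (∫ x, g x ∂μ)) := by
  set K := Metric.cthickening 1 (tsupport g)
  have hK : IsCompact K := IsCompact.cthickening hsupp
  have hbound : Integrable (K.indicator fun _ => C) μ :=
    (integrable_indicator_iff hK.measurableSet).2 (integrableOn_const hK.measure_ne_top)
  have hle {r x : ℝ} (hrx : dist r x ≤ 1) : ‖g x‖ ≤ K.indicator (fun _ => C) r := by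
    by_cases hx : g x = 0
    · rw [hx, norm_zero]
      exact Set.indicator_nonneg (fun _ _ => (norm_nonneg _).trans (hC x)) r
    · have hr : r ∈ K := Metric.mem_cthickening_of_dist_le r x 1 _ (subset_tsupport g hx) hrx
      rw [Set.indicator_of_mem hr]
      exact hC x
  have hgμ : Integrable g μ :=
    hbound.mono' hg.aestronglyMeasurable (.of_forall fun x => hle (by simp))
  refine tendsto_integral_replaceAtoms hg hgμ hbound ?_
    fun r => tendsto_integral_cond_Icc_add hg (hcont r) hε
  filter_upwards [(tendsto_nhdsWithin_iff.1 hε).1.eventually_le_const one_pos] with i hi r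
  refine ProbabilityTheory.ae_cond_of_forall_mem measurableSet_Icc fun x hx => hle ?_
  rw [dist_comm, Real.dist_eq, abs_of_nonneg (sub_nonneg.2 hx.1)]
  linarith [hx.2]

theorem smeared_atoms_vague_convergence_general (μ : Measure ℝ) [IsLocallyFiniteMeasure μ]
    (hpos : ∀ i, 0 < ε i) (hε : Tendsto ε l (𝓝 0)) :
    (∀ i x, smearAtoms μ (ε i) {x} = 0) ∧
    (∀ i, smearAtoms μ (ε i) Set.univ = μ Set.univ) ∧
    (∀ i r, smearAtoms μ (ε i) (Set.Iio r) ≤ μ (Set.Iio r)) ∧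
    (∀ r, ∀ φ : ℝ → E, Continuous φ → HasCompactSupport φ →
      Tendsto (fun i => ∫ x in Set.Iio r, φ x ∂smearAtoms μ (ε i)) l
        (𝓝 (∫ x in Set.Iio r, φ x ∂μ))) ∧
    (∀ φ : ℝ → E, Continuous φ → HasCompactSupport φ →
      Tendsto (fun i => ∫ x, φ x ∂smearAtoms μ (ε i)) l (𝓝 (∫ x, φ x ∂μ))) := by
  have hε' : Tendsto ε l (𝓝[>] 0) := tendsto_nhdsWithin_iff.2 ⟨hε, .of_forall hpos⟩
  refine ⟨fun i => smearAtoms_singleton μ (ε i), fun i => smearAtoms_univ μ (hpos i),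
    fun i => smearAtoms_Iio_le μ (ε i), fun r φ hφ hsupp => ?_, fun φ hφ hsupp => ?_⟩
  all_goals obtain ⟨C, hC⟩ := hφ.bounded_above_of_compact_support hsupp
  · simp only [← integral_indicator measurableSet_Iio]
    exact tendsto_integral_smearAtoms μ (hφ.stronglyMeasurable.indicator measurableSet_Iio)
      (continuousWithinAt_Ici_indicator_Iio hφ r)
      (hsupp.mono (Set.support_indicator.trans_subset Set.inter_subset_right))
      (fun x => (norm_indicator_le_norm_self φ x).trans (hC x)) hε'
  · exact tendsto_integral_smearAtoms μ hφ.stronglyMeasurable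
      (fun r => hφ.continuousWithinAt) hsupp hC hε'

end Convergence

/-- Smearing the atoms of a finite Borel measure `μ` on ℝ: writing `μ` as its diffuse part
plus its atomic part, and replacing each atom `μ({r}) δ_r` by `μ({r}) 2^n λ|_{[r, r+2^{-n}]}`,
we obtain diffuse finite measures `μₙ` with `μₙ((-∞,r)) ≤ μ((-∞,r))` for all `r`, such that
`χ_{(-∞,r)}·μₙ → χ_{(-∞,r)}·μ` vaguely for each `r`, and in particular `μₙ → μ` vaguely. -/
theorem smeared_atoms_vague_convergence
    (μ : Measure ℝ) [IsFiniteMeasure μ]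
    (μn : ℕ → Measure ℝ)
    (hμn : ∀ n : ℕ, μn n = μ.restrict {x | μ {x} = 0} +
      Measure.sum (fun r : {r : ℝ // μ {r} ≠ 0} =>
        μ {(r : ℝ)} • ((2 ^ n : ℝ≥0∞) •
          volume.restrict (Set.Icc (r : ℝ) ((r : ℝ) + ((2 : ℝ) ^ n)⁻¹))))) :
    (∀ n : ℕ, ∀ x : ℝ, μn n {x} = 0) ∧
    (∀ n : ℕ, μn n Set.univ < ⊤) ∧
    (∀ n : ℕ, ∀ r : ℝ, μn n (Set.Iio r) ≤ μ (Set.Iio r)) ∧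
    (∀ r : ℝ, ∀ φ : ℝ → ℝ, Continuous φ → HasCompactSupport φ →
      Tendsto (fun n => ∫ x in Set.Iio r, φ x ∂(μn n)) atTop
        (𝓝 (∫ x in Set.Iio r, φ x ∂μ))) ∧
    (∀ φ : ℝ → ℝ, Continuous φ → HasCompactSupport φ →
      Tendsto (fun n => ∫ x, φ x ∂(μn n)) atTop (𝓝 (∫ x, φ x ∂μ))) := by
  obtain rfl := funext fun n => (hμn n).trans (smearAtoms_inv_two_pow μ n).symm
  obtain ⟨hdiffuse, hmass, hrest⟩ := smeared_atoms_vague_convergence_general (E := ℝ) μ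
    (fun n : ℕ => inv_pos.2 (pow_pos two_pos n))
    (tendsto_inv_atTop_zero.comp (tendsto_pow_atTop_atTop_of_one_lt one_lt_two))
  exact ⟨hdiffuse, fun n => (hmass n).trans_lt (measure_lt_top μ _), hrest⟩
end

section
/- Let μ be a diffuse finite Borel measure on ℝ (μ({x}) = 0 for all x) and let α ∈ (0,1). Then for every r ∈ ℝ, ∫_{(−∞,r)} μ((−∞,s))^{−α} dμ(s) = (1/(1−α)) · μ((−∞,r))^{1−α}, where the integral is the Lebesgue integral with values in [0,+∞] and the integrand is interpreted as +∞ where μ((−∞,s)) = 0 (a μ-null set, since μ is diffuse). -/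
open MeasureTheory ENNReal
open scoped NNReal

/-!
For a finite diffuse measure `μ`, the function `F s = μ (Iio s)` pushes `μ` forward to Lebesgue
measure on `(0, μ univ]`. The reason is that `{F ≤ t}` is both the union of the rays `Iic s` with
`F s ≤ t` and the intersection of the rays `Iio u` with `t < F u`; since `μ (Iic s) = F s`,
continuity of `μ` along monotone families shows that its measure is `min t (μ univ)`. Applied to
`μ` restricted to `Iio r`, this turns the integral into `∫ x in 0..μ (Iio r), x ^ (-α)`.
-/

section LinearOrder

variable {X : Type*} [LinearOrder X] [MeasurableSpace X]

theorem monotone_measure_Iio (μ : Measure X) : Monotone fun s ↦ μ (Set.Iio s) :=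
  fun _ _ hst ↦ measure_mono (Set.Iio_subset_Iio hst)

variable [TopologicalSpace X]

theorem measurable_measureReal_Iio [OrderClosedTopology X] [BorelSpace X]
    (μ : Measure X) : Measurable fun s ↦ μ.real (Set.Iio s) :=
  (monotone_measure_Iio μ).measurable.ennreal_toReal

variable [OrderTopology X] [SecondCountableTopology X]

theorem measure_setOf_measure_Iio_le_le (μ : Measure X) [NullSingletonClass μ] (t : ℝ≥0∞) :
    μ {s | μ (Set.Iio s) ≤ t} ≤ t := by
  set L : Set X := {s | μ (Set.Iio s) ≤ t}
  have hL : IsLowerSet L := fun _ _ hle hs ↦ (monotone_measure_Iio μ hle).trans hs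
  have : L.OrdConnected := hL.ordConnected
  have hL_eq : ⋃ s : L, Set.Iic (s : X) = L := by
    rw [Set.iUnion_coe_set]
    exact Set.Subset.antisymm (Set.iUnion₂_subset fun s hs ↦ hL.Iic_subset hs)
      fun s hs ↦ Set.mem_biUnion hs Set.self_mem_Iic
  have hmono : Monotone fun s : L ↦ Set.Iic (s : X) := fun _ _ h ↦ Set.Iic_subset_Iic.2 h
  calc μ L = ⨆ s : L, μ (Set.Iic (s : X)) := by rw [← hmono.measure_iUnion, hL_eq]
    _ ≤ t := iSup_le fun s ↦ (measure_congr Iio_ae_eq_Iic).symm.trans_le s.2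

theorem min_le_measure_setOf_measure_Iio_le [OpensMeasurableSpace X] (μ : Measure X)
    [IsFiniteMeasure μ] (t : ℝ≥0∞) :
    min t (μ Set.univ) ≤ μ {s | μ (Set.Iio s) ≤ t} := by
  set U : Set X := {u | t < μ (Set.Iio u)}
  have hU : IsUpperSet U := fun _ _ hle hu ↦ hu.trans_le (monotone_measure_Iio μ hle)
  have : U.OrdConnected := hU.ordConnected
  have hU_compl : {s | μ (Set.Iio s) ≤ t} = Uᶜ := by ext; simp [U]
  rw [hU_compl]
  rcases U.eq_empty_or_nonempty with hempty | ⟨u₀, hu₀⟩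
  · simp [hempty]
  have hU_eq : ⋂ u : U, Set.Iio (u : X) = Uᶜ := by
    ext s
    simp only [Set.mem_iInter, Set.mem_Iio, Subtype.forall, Set.mem_compl_iff]
    exact ⟨fun h hs ↦ (h s hs).false, fun hs u hu ↦ lt_of_not_ge fun hus ↦ hs (hU hus hu)⟩
  have hmono : Monotone fun u : U ↦ Set.Iio (u : X) := fun _ _ h ↦ Set.Iio_subset_Iio h
  calc min t (μ Set.univ) ≤ t := min_le_left _ _
    _ ≤ ⨅ u : U, μ (Set.Iio (u : X)) := le_iInf fun u ↦ u.2.le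
    _ = μ Uᶜ := by
      rw [← hmono.measure_iInter (fun _ ↦ measurableSet_Iio.nullMeasurableSet)
        ⟨⟨u₀, hu₀⟩, measure_ne_top _ _⟩, hU_eq]

theorem measure_setOf_measure_Iio_le [OpensMeasurableSpace X] (μ : Measure X)
    [IsFiniteMeasure μ] [NullSingletonClass μ] (t : ℝ≥0∞) :
    μ {s | μ (Set.Iio s) ≤ t} = min t (μ Set.univ) :=
  le_antisymm (le_min (measure_setOf_measure_Iio_le_le μ t) (measure_mono (Set.subset_univ _)))
    (min_le_measure_setOf_measure_Iio_le μ t)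

variable [BorelSpace X]

theorem map_measureReal_Iio (μ : Measure X) [IsFiniteMeasure μ] [NullSingletonClass μ] :
    μ.map (fun s ↦ μ.real (Set.Iio s)) = volume.restrict (Set.Ioc 0 (μ.real Set.univ)) := by
  refine Measure.ext_of_Iic _ _ fun t ↦ ?_
  rw [Measure.map_apply (measurable_measureReal_Iio μ) measurableSet_Iic,
    Measure.restrict_apply measurableSet_Iic, Set.inter_comm, Set.Ioc_inter_Iic, Real.volume_Ioc,
    sub_zero]
  rcases lt_or_ge t 0 with ht | ht
  · have hempty : (fun s ↦ μ.real (Set.Iio s)) ⁻¹' Set.Iic t = ∅ :=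
      Set.eq_empty_of_forall_notMem fun _ hs ↦ (measureReal_nonneg.trans hs).not_gt ht
    rw [hempty, measure_empty, ENNReal.ofReal_of_nonpos ((min_le_right _ _).trans ht.le)]
  · have hpre : (fun s ↦ μ.real (Set.Iio s)) ⁻¹' Set.Iic t =
        {s | μ (Set.Iio s) ≤ ENNReal.ofReal t} := by
      ext s
      exact (ENNReal.le_ofReal_iff_toReal_le (measure_ne_top _ _) ht).symm
    rw [hpre, measure_setOf_measure_Iio_le, min_comm, ENNReal.ofReal_min, ofReal_measureReal]

theorem lintegral_comp_measure_Iio (μ : Measure X) [IsFiniteMeasure μ] [NullSingletonClass μ]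
    {g : ℝ≥0∞ → ℝ≥0∞} (hg : Measurable g) :
    ∫⁻ s, g (μ (Set.Iio s)) ∂μ =
      ∫⁻ x in Set.Ioc 0 (μ.real Set.univ), g (ENNReal.ofReal x) := by
  rw [← map_measureReal_Iio, lintegral_map (by fun_prop) (measurable_measureReal_Iio μ)]
  simp only [ofReal_measureReal (measure_ne_top μ _)]

theorem setLIntegral_Iio_comp_measure_Iio (μ : Measure X) [NullSingletonClass μ] {r : X}
    (hr : μ (Set.Iio r) ≠ ∞) {g : ℝ≥0∞ → ℝ≥0∞} (hg : Measurable g) :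
    ∫⁻ s in Set.Iio r, g (μ (Set.Iio s)) ∂μ =
      ∫⁻ x in Set.Ioc 0 (μ.real (Set.Iio r)), g (ENNReal.ofReal x) := by
  have : IsFiniteMeasure (μ.restrict (Set.Iio r)) := isFiniteMeasure_restrict.2 hr
  have hrestrict : ∀ s ∈ Set.Iio r, μ.restrict (Set.Iio r) (Set.Iio s) = μ (Set.Iio s) :=
    fun s hs ↦ Measure.restrict_eq_self _ (Set.Iio_subset_Iio (le_of_lt hs))
  calc ∫⁻ s in Set.Iio r, g (μ (Set.Iio s)) ∂μ
      = ∫⁻ s in Set.Iio r, g (μ.restrict (Set.Iio r) (Set.Iio s)) ∂μ :=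
        setLIntegral_congr_fun measurableSet_Iio fun s hs ↦ by rw [hrestrict s hs]
    _ = ∫⁻ x in Set.Ioc 0 (μ.real (Set.Iio r)), g (ENNReal.ofReal x) := by
        rw [lintegral_comp_measure_Iio _ hg, measureReal_restrict_apply_univ]

end LinearOrder

theorem setLIntegral_Ioc_ofReal_rpow {β M : ℝ} (hβ : -1 < β) (hM : 0 ≤ M) :
    ∫⁻ x in Set.Ioc 0 M, ENNReal.ofReal x ^ β =
      ENNReal.ofReal (1 / (β + 1)) * ENNReal.ofReal M ^ (β + 1) := by
  have hβ' : 0 < β + 1 := by linarith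
  have hint : IntegrableOn (fun x : ℝ ↦ x ^ β) (Set.Ioc 0 M) :=
    (intervalIntegrable_iff_integrableOn_Ioc_of_le hM).1
      (intervalIntegral.intervalIntegrable_rpow' hβ)
  have hnonneg : 0 ≤ᵐ[volume.restrict (Set.Ioc 0 M)] fun x : ℝ ↦ x ^ β :=
    (ae_restrict_mem measurableSet_Ioc).mono fun _ hx ↦ Real.rpow_nonneg hx.1.le β
  calc ∫⁻ x in Set.Ioc 0 M, ENNReal.ofReal x ^ β
      = ∫⁻ x in Set.Ioc 0 M, ENNReal.ofReal (x ^ β) :=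
        setLIntegral_congr_fun measurableSet_Ioc fun _ hx ↦ ENNReal.ofReal_rpow_of_pos hx.1
    _ = ENNReal.ofReal (∫ x in 0..M, x ^ β) := by
        rw [intervalIntegral.integral_of_le hM, ofReal_integral_eq_lintegral_ofReal hint hnonneg]
    _ = ENNReal.ofReal (1 / (β + 1) * M ^ (β + 1)) := by
        rw [integral_rpow (Or.inl hβ), Real.zero_rpow hβ'.ne', sub_zero, one_div_mul_eq_div]
    _ = ENNReal.ofReal (1 / (β + 1)) * ENNReal.ofReal M ^ (β + 1) := by
        rw [ENNReal.ofReal_mul (by positivity), ENNReal.ofReal_rpow_of_nonneg hM hβ'.le]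

theorem lintegral_measure_Iio_rpow_neg_general {X : Type*} [LinearOrder X] [TopologicalSpace X]
    [OrderTopology X] [SecondCountableTopology X] [MeasurableSpace X] [BorelSpace X]
    (μ : Measure X) [NullSingletonClass μ] {α : ℝ} (hα : α < 1) {r : X} (hr : μ (Set.Iio r) ≠ ∞) :
    ∫⁻ s in Set.Iio r, (μ (Set.Iio s)) ^ (-α) ∂μ =
      ENNReal.ofReal (1 / (1 - α)) * (μ (Set.Iio r)) ^ (1 - α) := by
  rw [setLIntegral_Iio_comp_measure_Iio μ hr (g := (· ^ (-α))) (by fun_prop),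
    setLIntegral_Ioc_ofReal_rpow (neg_lt_neg hα) measureReal_nonneg, neg_add_eq_sub,
    ofReal_measureReal hr]

/-- For a diffuse finite Borel measure `μ` on ℝ and `α ∈ (0,1)`,
`∫_{(-∞,r)} μ((-∞,s))^{-α} dμ(s) = (1/(1-α)) μ((-∞,r))^{1-α}`. -/
theorem lintegral_measure_Iio_rpow_neg
    (μ : Measure ℝ) [IsFiniteMeasure μ] (hd : ∀ x : ℝ, μ {x} = 0)
    (α : ℝ) (hα0 : 0 < α) (hα1 : α < 1) :
    ∀ r : ℝ,
      ∫⁻ s in Set.Iio r, (μ (Set.Iio s)) ^ (-α) ∂μ =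
        ENNReal.ofReal (1 / (1 - α)) * (μ (Set.Iio r)) ^ (1 - α) := by
  have : NullSingletonClass μ := ⟨hd⟩
  exact fun r ↦ lintegral_measure_Iio_rpow_neg_general μ hα1 (measure_ne_top μ (Set.Iio r))
end

section
/- Let f, g : ℝ → [0,+∞) be two functions, with f decreasing (non-increasing) and left-continuous, g increasing (non-decreasing) and right-continuous, and such that the product f·g has compact support. Then lim_{ε→0⁺} sup_{r∈ℝ} f(r−ε) g(r) = sup_{r∈ℝ} f(r) g(r). -/
open Filter
open scoped Topology

/-!
A nonincreasing left-continuous function is upper semicontinuous, and so is a nondecreasing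
right-continuous one. Hence `(ε, r) ↦ f (r - ε) * g r` is upper semicontinuous. For `ε` bounded
above it vanishes unless `r` lies in a fixed compact set, so its supremum over `r` is upper
semicontinuous in `ε`, which bounds the limit from above. Since `f` is nonincreasing, the shift by
`ε > 0` can only increase the supremum, which bounds it from below.
-/

section Semicontinuity

theorem upperSemicontinuous_of_antitone_of_continuousWithinAt_Iic {α β : Type*} [LinearOrder α]
    [TopologicalSpace α] [LinearOrder β] [TopologicalSpace β] [ClosedIciTopology β] {f : α → β}
    (hf : Antitone f) (hcont : ∀ a, ContinuousWithinAt f (Set.Iic a) a) :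
    UpperSemicontinuous f := by
  intro a c hc
  have hleft : ∀ᶠ x in 𝓝 a, x ∈ Set.Iic a → f x < c :=
    eventually_nhdsWithin_iff.1 ((hcont a).eventually_lt_const hc)
  filter_upwards [hleft] with x hx
  rcases le_total x a with hxa | hax
  · exact hx hxa
  · exact (hf hax).trans_lt hc

theorem upperSemicontinuous_of_monotone_of_continuousWithinAt_Ici {α β : Type*} [LinearOrder α]
    [TopologicalSpace α] [LinearOrder β] [TopologicalSpace β] [ClosedIciTopology β] {f : α → β}
    (hf : Monotone f) (hcont : ∀ a, ContinuousWithinAt f (Set.Ici a) a) :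
    UpperSemicontinuous f :=
  upperSemicontinuous_of_antitone_of_continuousWithinAt_Iic (α := αᵒᵈ) hf.dual_left hcont

variable {X Y : Type*} [TopologicalSpace X] [TopologicalSpace Y]

theorem upperSemicontinuous_mul_of_nonneg {𝕜 : Type*} [Field 𝕜] [LinearOrder 𝕜]
    [IsStrictOrderedRing 𝕜] [TopologicalSpace 𝕜] [OrderTopology 𝕜] {f g : X → 𝕜}
    (hf : UpperSemicontinuous f) (hg : UpperSemicontinuous g) (hf0 : ∀ x, 0 ≤ f x)
    (hg0 : ∀ x, 0 ≤ g x) : UpperSemicontinuous fun x => f x * g x := by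
  intro x c hc
  have hlim : Tendsto (fun δ => (f x + δ) * (g x + δ)) (𝓝[>] 0) (𝓝 (f x * g x)) := by
    have hcont : Continuous fun δ => (f x + δ) * (g x + δ) := by fun_prop
    simpa using (hcont.tendsto 0).mono_left nhdsWithin_le_nhds
  obtain ⟨δ, hδc, hδ : 0 < δ⟩ := ((hlim.eventually_lt_const hc).and self_mem_nhdsWithin).exists
  filter_upwards [hf x _ (lt_add_of_pos_right _ hδ), hg x _ (lt_add_of_pos_right _ hδ)]
    with y hfy hgy
  calc f y * g y ≤ (f x + δ) * (g x + δ) :=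
        mul_le_mul hfy.le hgy.le (hg0 y) (add_nonneg (hf0 x) hδ.le)
    _ < c := hδc

theorem bddAbove_range_of_upperSemicontinuous_of_forall_notMem_le {β : Type*} [LinearOrder β]
    {h : X → β} {K : Set X} {b : β} (hh : UpperSemicontinuous h) (hK : IsCompact K)
    (hb : ∀ x ∉ K, h x ≤ b) : BddAbove (Set.range h) := by
  have : Nonempty β := ⟨b⟩
  obtain ⟨B, hB⟩ := (hh.upperSemicontinuousOn K).bddAbove_of_isCompact hK
  refine ⟨max B b, Set.forall_mem_range.2 fun x => ?_⟩
  by_cases hx : x ∈ K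
  · exact le_max_of_le_left (hB (Set.mem_image_of_mem h hx))
  · exact le_max_of_le_right (hb x hx)

theorem upperSemicontinuousAt_iSup_of_eventually_forall_notMem_eq_zero {φ : X → Y → ℝ} {K : Set Y}
    {x₀ : X} (hφ : UpperSemicontinuous fun p : X × Y => φ p.1 p.2) (hφ0 : ∀ y, 0 ≤ φ x₀ y)
    (hK : IsCompact K) (hzero : ∀ᶠ x in 𝓝 x₀, ∀ y ∉ K, φ x y = 0) :
    UpperSemicontinuousAt (fun x => ⨆ y, φ x y) x₀ := by
  intro c hc
  obtain ⟨d, hd, hdc⟩ := exists_between hc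
  have hbdd : BddAbove (Set.range (φ x₀)) :=
    bddAbove_range_of_upperSemicontinuous_of_forall_notMem_le
      (hφ.comp (Continuous.prodMk_right x₀)) hK fun y hy => (hzero.self_of_nhds y hy).le
  have hd0 : 0 ≤ d := (Real.iSup_nonneg hφ0).trans hd.le
  have hlt : ∀ᶠ x in 𝓝 x₀, ∀ y ∈ K, φ x y < d :=
    hK.eventually_forall_of_forall_eventually fun y _ =>
      hφ (x₀, y) d ((le_ciSup hbdd y).trans_lt hd)
  filter_upwards [hlt, hzero] with x hxlt hxzero
  refine (Real.iSup_le (fun y => ?_) hd0).trans_lt hdc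
  by_cases hy : y ∈ K
  · exact (hxlt y hy).le
  · exact (hxzero y hy).trans_le hd0

end Semicontinuity

section Vanishing

variable {α R : Type*} [LinearOrder α] [MulZeroClass R] [NoZeroDivisors R] [PartialOrder R]
  {f g : α → R}

theorem eq_zero_or_eventually_atBot_eq_zero_of_mul (hf : Antitone f) (hf0 : ∀ a, 0 ≤ f a)
    (hfg : ∀ᶠ a in atBot, f a * g a = 0) : (∀ a, f a = 0) ∨ ∀ᶠ a in atBot, g a = 0 := by
  refine or_iff_not_imp_left.2 fun hne => ?_
  obtain ⟨a, ha⟩ := not_forall.1 hne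
  filter_upwards [hfg, eventually_le_atBot a] with b hb hba
  have hfb : 0 < f b := ((hf0 a).lt_of_ne' ha).trans_le (hf hba)
  exact (mul_eq_zero.1 hb).resolve_left hfb.ne'

theorem eventually_atTop_eq_zero_or_of_mul (hf : Antitone f) (hf0 : ∀ a, 0 ≤ f a)
    (hfg : ∀ᶠ a in atTop, f a * g a = 0) :
    (∀ᶠ a in atTop, f a = 0) ∨ ∀ᶠ a in atTop, g a = 0 := by
  by_cases hzero : ∃ a, f a = 0
  · obtain ⟨a, ha⟩ := hzero
    left
    filter_upwards [eventually_ge_atTop a] with b hab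
    exact ((hf hab).trans_eq ha).antisymm (hf0 b)
  · right
    filter_upwards [hfg] with b hb
    exact (mul_eq_zero.1 hb).resolve_left fun hfb => hzero ⟨b, hfb⟩

end Vanishing

section ShiftedProduct

variable {f g : ℝ → ℝ}

theorem exists_isCompact_forall_notMem_shifted_mul_eq_zero (hf : Antitone f) (hf0 : ∀ r, 0 ≤ f r)
    (hsupp : HasCompactSupport fun r => f r * g r) (c : ℝ) :
    ∃ K : Set ℝ, IsCompact K ∧ ∀ ε ≤ c, ∀ r ∉ K, f (r - ε) * g r = 0 := by
  have hends : (∀ᶠ r in atBot, f r * g r = 0) ∧ ∀ᶠ r in atTop, f r * g r = 0 := by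
    rw [← eventually_sup, ← cocompact_eq_atBot_atTop, ← coclosedCompact_eq_cocompact]
    exact hasCompactSupport_iff_eventuallyEq.1 hsupp
  rcases eq_zero_or_eventually_atBot_eq_zero_of_mul hf hf0 hends.1 with hfz | hbot
  · exact ⟨∅, isCompact_empty, fun ε _ r _ => by rw [hfz, zero_mul]⟩
  have htop : ∀ᶠ r in atTop, ∀ ε ≤ c, f (r - ε) * g r = 0 := by
    rcases eventually_atTop_eq_zero_or_of_mul hf hf0 hends.2 with hfz | hgz
    · obtain ⟨b, hb⟩ := eventually_atTop.1 hfz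
      filter_upwards [eventually_ge_atTop (b + c)] with r hr ε hε
      rw [hb (r - ε) (by linarith), zero_mul]
    · filter_upwards [hgz] with r hr ε _
      rw [hr, mul_zero]
  obtain ⟨a, ha⟩ := eventually_atBot.1 hbot
  obtain ⟨b, hb⟩ := eventually_atTop.1 htop
  refine ⟨Set.Icc a b, isCompact_Icc, fun ε hε r hr => ?_⟩
  rcases le_total r a with hra | har
  · rw [ha r hra, mul_zero]
  · exact hb r (not_le.1 fun hrb => hr ⟨har, hrb⟩).le ε hε

theorem upperSemicontinuous_shifted_mul (hf : UpperSemicontinuous f) (hg : UpperSemicontinuous g)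
    (hf0 : ∀ r, 0 ≤ f r) (hg0 : ∀ r, 0 ≤ g r) :
    UpperSemicontinuous fun p : ℝ × ℝ => f (p.2 - p.1) * g p.2 :=
  upperSemicontinuous_mul_of_nonneg (hf.comp (continuous_snd.sub continuous_fst))
    (hg.comp continuous_snd) (fun _ => hf0 _) fun _ => hg0 _

theorem tendsto_sup_shifted_product_general (hf0 : ∀ r, 0 ≤ f r) (hg0 : ∀ r, 0 ≤ g r)
    (hf : Antitone f) (hfusc : UpperSemicontinuous f) (hgusc : UpperSemicontinuous g)
    (hsupp : HasCompactSupport fun r => f r * g r) :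
    Tendsto (fun ε : ℝ => ⨆ r : ℝ, f (r - ε) * g r) (𝓝[>] 0) (𝓝 (⨆ r : ℝ, f r * g r)) := by
  obtain ⟨K, hK, hzero⟩ := exists_isCompact_forall_notMem_shifted_mul_eq_zero hf hf0 hsupp 1
  have husc := upperSemicontinuous_shifted_mul hfusc hgusc hf0 hg0
  have hsup : UpperSemicontinuousAt (fun ε : ℝ => ⨆ r : ℝ, f (r - ε) * g r) 0 :=
    upperSemicontinuousAt_iSup_of_eventually_forall_notMem_eq_zero husc
      (fun r => mul_nonneg (hf0 _) (hg0 r)) hK ((eventually_le_nhds one_pos).mono hzero)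
  have hle : ∀ᶠ ε : ℝ in 𝓝[>] 0, ⨆ r, f r * g r ≤ ⨆ r, f (r - ε) * g r := by
    filter_upwards [Ioc_mem_nhdsGT one_pos] with ε ⟨hε0, hε1⟩
    have hbdd : BddAbove (Set.range fun r => f (r - ε) * g r) :=
      bddAbove_range_of_upperSemicontinuous_of_forall_notMem_le
        (husc.comp (Continuous.prodMk_right ε)) hK fun r hr => (hzero ε hε1 r hr).le
    exact ciSup_mono hbdd fun r =>
      mul_le_mul_of_nonneg_right (hf (sub_le_self r hε0.le)) (hg0 r)
  refine tendsto_order.2 ⟨fun c hc => hle.mono fun ε hε => hc.trans_le hε, fun c hc => ?_⟩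
  exact nhdsWithin_le_nhds (hsup c (by simpa only [sub_zero] using hc))

end ShiftedProduct

/-- Lemma 2: for `f` decreasing and left-continuous, `g` increasing and right-continuous,
both nonnegative, with `f·g` compactly supported,
`lim_{ε→0⁺} sup_r f(r-ε) g(r) = sup_r f(r) g(r)`. -/
theorem tendsto_sup_shifted_product
    (f g : ℝ → ℝ) (hf0 : ∀ r, 0 ≤ f r) (hg0 : ∀ r, 0 ≤ g r)
    (hf : Antitone f) (hflc : ∀ r : ℝ, ContinuousWithinAt f (Set.Iic r) r)
    (hg : Monotone g) (hgrc : ∀ r : ℝ, ContinuousWithinAt g (Set.Ici r) r)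
    (hsupp : HasCompactSupport fun r => f r * g r) :
    Tendsto (fun ε : ℝ => ⨆ r : ℝ, f (r - ε) * g r) (𝓝[>] (0 : ℝ))
      (𝓝 (⨆ r : ℝ, f r * g r)) :=
  tendsto_sup_shifted_product_general hf0 hg0 hf
    (upperSemicontinuous_of_antitone_of_continuousWithinAt_Iic hf hflc)
    (upperSemicontinuous_of_monotone_of_continuousWithinAt_Ici hg hgrc) hsupp
end

section
/- Let f : ℝ → ℝ be a continuous monotone non-decreasing function, let μ_f be the Lebesgue–Stieltjes measure associated with f (so that μ_f((a,b]) = f(b) − f(a) for a ≤ b), and let φ : ℝ → ℝ be continuously differentiable. Then for all a ≤ b, φ(f(b)) − φ(f(a)) = ∫_{(a,b]} φ'(f(s)) dμ_f(s). -/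
open MeasureTheory

/-!
The push-forward under `f` of the Stieltjes measure on `(a, b]` is Lebesgue measure on
`(f a, f b]`: for `f a ≤ y ≤ f b`, the part of `(a, b]` where `f ≤ y` is an interval
`(a, c]` with `f c = y`, where `c` is the *last* point of the fibre over `y` (`f` may have flat
pieces), and both measures give mass `y - f a`. Changing variables then reduces the chain rule to
the fundamental theorem of calculus for `φ` on `[f a, f b]`.
-/

open Set

section Pushforward

variable {α β : Type*}
  [ConditionallyCompleteLinearOrder α] [TopologicalSpace α] [OrderTopology α] [DenselyOrdered α]
  [LinearOrder β] [TopologicalSpace β]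
  {f : α → β} {a b : α}

theorem exists_isGreatest_fiber_of_continuousOn_Icc [OrderClosedTopology β] (hab : a ≤ b)
    (hf : ContinuousOn f (Icc a b)) {y : β} (hy : y ∈ Icc (f a) (f b)) :
    ∃ c, IsGreatest (Icc a b ∩ f ⁻¹' {y}) c := by
  have fiber_compact : IsCompact (Icc a b ∩ f ⁻¹' {y}) :=
    isCompact_Icc.of_isClosed_subset
      (hf.preimage_isClosed_of_isClosed isClosed_Icc isClosed_singleton) inter_subset_left
  exact fiber_compact.exists_isGreatest (intermediate_value_Icc hab hf hy)

theorem exists_preimage_Iic_inter_Ioc_eq_Ioc [OrderClosedTopology β] (hab : a ≤ b)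
    (hf : ContinuousOn f (Icc a b)) (hmono : MonotoneOn f (Icc a b)) (y : β) :
    ∃ c ∈ Icc a b, f ⁻¹' Iic y ∩ Ioc a b = Ioc a c ∧
      Iic y ∩ Ioc (f a) (f b) = Ioc (f a) (f c) := by
  have a_mem : a ∈ Icc a b := left_mem_Icc.2 hab
  have b_mem : b ∈ Icc a b := right_mem_Icc.2 hab
  rcases lt_or_ge y (f a) with y_lt | le_y
  · refine ⟨a, a_mem, ?_, ?_⟩
    · rw [Ioc_self]
      exact eq_empty_of_forall_notMem fun x ⟨hxy, hx⟩ ↦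
        (y_lt.trans_le (hmono a_mem (Ioc_subset_Icc_self hx) hx.1.le)).not_ge hxy
    · rw [Ioc_self]
      exact eq_empty_of_forall_notMem fun x ⟨hxy, hx⟩ ↦ (y_lt.trans hx.1).not_ge hxy
  · obtain ⟨c, ⟨c_mem, hfc : f c = min (f b) y⟩, c_max⟩ :=
      exists_isGreatest_fiber_of_continuousOn_Icc hab hf
        ⟨le_min (hmono a_mem b_mem hab) le_y, min_le_left (f b) y⟩
    refine ⟨c, c_mem, Subset.antisymm ?_ ?_, by rw [inter_comm, Ioc_inter_Iic, hfc]⟩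
    · rintro x ⟨hxy : f x ≤ y, hx⟩
      have x_mem : x ∈ Icc a b := Ioc_subset_Icc_self hx
      refine ⟨hx.1, le_of_not_gt fun c_lt_x ↦ c_lt_x.not_ge (c_max ⟨x_mem, ?_⟩)⟩
      exact le_antisymm (le_min (hmono x_mem b_mem hx.2) hxy)
        (hfc ▸ hmono c_mem x_mem c_lt_x.le)
    · intro x hx
      have x_mem : x ∈ Icc a b := ⟨hx.1.le, hx.2.trans c_mem.2⟩
      exact ⟨(hmono x_mem c_mem hx.2).trans (hfc.trans_le (min_le_right _ _)), hx.1, x_mem.2⟩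

theorem map_restrict_Ioc_eq_restrict_Ioc [MeasurableSpace α] [OpensMeasurableSpace α]
    [OrderTopology β] [SecondCountableTopology β] [MeasurableSpace β] [BorelSpace β]
    (hab : a ≤ b) (hf : ContinuousOn f (Icc a b)) (hmono : MonotoneOn f (Icc a b))
    {μ : Measure α} {ν : Measure β} (hν : ν (Ioc (f a) (f b)) ≠ ⊤)
    (hμν : ∀ c ∈ Icc a b, μ (Ioc a c) = ν (Ioc (f a) (f c))) :
    (μ.restrict (Ioc a b)).map f = ν.restrict (Ioc (f a) (f b)) := by
  have f_aemeasurable : AEMeasurable f (μ.restrict (Ioc a b)) :=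
    (hf.mono Ioc_subset_Icc_self).aemeasurable measurableSet_Ioc
  have : IsFiniteMeasure (μ.restrict (Ioc a b)) :=
    isFiniteMeasure_restrict.2 (hμν b (right_mem_Icc.2 hab) ▸ hν)
  have : IsFiniteMeasure ((μ.restrict (Ioc a b)).map f) := Measure.isFiniteMeasure_map _ f
  refine Measure.ext_of_Iic _ _ fun y ↦ ?_
  obtain ⟨c, c_mem, preimage_eq, codomain_eq⟩ :=
    exists_preimage_Iic_inter_Ioc_eq_Ioc hab hf hmono y
  rw [Measure.map_apply_of_aemeasurable f_aemeasurable measurableSet_Iic,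
    Measure.restrict_apply' measurableSet_Ioc, Measure.restrict_apply' measurableSet_Ioc,
    preimage_eq, codomain_eq, hμν c c_mem]

end Pushforward

theorem stieltjes_chain_rule_general {α E : Type*}
    [ConditionallyCompleteLinearOrder α] [TopologicalSpace α] [OrderTopology α] [DenselyOrdered α]
    [MeasurableSpace α] [OpensMeasurableSpace α]
    [NormedAddCommGroup E] [NormedSpace ℝ E] [CompleteSpace E]
    {f : α → ℝ} {a b : α} (hab : a ≤ b)
    (hf : ContinuousOn f (Icc a b)) (hmono : MonotoneOn f (Icc a b))
    {μ : Measure α} (hμ : ∀ c ∈ Icc a b, μ (Ioc a c) = ENNReal.ofReal (f c - f a))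
    {φ φ' : ℝ → E} (hφ : ContinuousOn φ (Icc (f a) (f b)))
    (hφ' : ∀ x ∈ Ioo (f a) (f b), HasDerivAt φ (φ' x) x)
    (hint : IntervalIntegrable φ' volume (f a) (f b)) :
    φ (f b) - φ (f a) = ∫ s in Ioc a b, φ' (f s) ∂μ := by
  have hfab : f a ≤ f b := hmono (left_mem_Icc.2 hab) (right_mem_Icc.2 hab) hab
  have map_eq : (μ.restrict (Ioc a b)).map f = volume.restrict (Ioc (f a) (f b)) :=
    map_restrict_Ioc_eq_restrict_Ioc hab hf hmono measure_Ioc_lt_top.ne fun c hc ↦ by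
      rw [hμ c hc, Real.volume_Ioc]
  calc φ (f b) - φ (f a)
    _ = ∫ x in f a..f b, φ' x :=
      (intervalIntegral.integral_eq_sub_of_hasDerivAt_of_le hfab hφ hφ' hint).symm
    _ = ∫ x, φ' x ∂(μ.restrict (Ioc a b)).map f := by
      rw [intervalIntegral.integral_of_le hfab, map_eq]
    _ = ∫ s in Ioc a b, φ' (f s) ∂μ :=
      integral_map ((hf.mono Ioc_subset_Icc_self).aemeasurable measurableSet_Ioc)
        (map_eq ▸ hint.1.aestronglyMeasurable)

/-- Chain rule for a continuous non-decreasing function `f` and its Lebesgue–Stieltjes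
measure `μf`: for `φ` of class `C¹`, `φ(f(b)) - φ(f(a)) = ∫_{(a,b]} φ'(f(s)) dμf(s)`. -/
theorem stieltjes_chain_rule
    (f : ℝ → ℝ) (hf : Continuous f) (hmono : Monotone f)
    (μf : Measure ℝ)
    (hμf : ∀ a b : ℝ, a ≤ b → μf (Set.Ioc a b) = ENNReal.ofReal (f b - f a))
    (φ : ℝ → ℝ) (hφ : ContDiff ℝ 1 φ) :
    ∀ a b : ℝ, a ≤ b →
      φ (f b) - φ (f a) = ∫ s in Set.Ioc a b, deriv φ (f s) ∂μf :=
  fun a _ hab ↦ stieltjes_chain_rule_general hab hf.continuousOn (hmono.monotoneOn _)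
    (fun c hc ↦ hμf a c hc.1) hφ.continuous.continuousOn
    (fun x _ ↦ (hφ.differentiable one_ne_zero x).hasDerivAt)
    ((hφ.continuous_deriv le_rfl).intervalIntegrable _ _)
end
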